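/- arXiv:2307.11529 — 8 statements merged into one kernel-verified Lean document; each statement's English description precedes it below -/
import Mathlib

section
/- Let X be a uniformly locally finite metric space and let a : X → ℤ be a bounded function. Then a is a boundary ([a] = 0 in H_0^{uf}(X)) if and only if there are t > 0 and C > 0 such that |Σ_{x∈A} a(x)| ≤ C·|∂_t(A)| for every finite subset A ⊆ X. -/
/-!
Whyte's criterion for the vanishing of a class in `H_0^{uf}(X)`.

If `a` is the divergence of a bounded `b` of finite propagation, then in `∑_{x ∈ A} a x` the
contributions of pairs in `A × A` cancel by antisymmetry, and what is left is a bounded flow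
between `A` and `∂_t A` (`abs_sum_le_of_ufBoundary`).

Conversely, for a large integer `M` compare the multiset on `X` with multiplicities `M + a x` and
the one with constant multiplicity `M`. The isoperimetric inequality is exactly what verifies
Hall's condition for the relation "at distance at most `t`" in both directions, so Hall's theorem
for infinite families of finite sets (`fibered_exists_injective`) gives injections both ways that
move points by at most `t`. The Schröder–Bernstein construction only uses the values of these two
injections, hence yields a bijection that moves points by at most `t`. Letting `b x z` be the
number of points over `x` sent to points over `z`, the row sums of `b` are `M + a x` and its column
sums are `M`, so `a` is a boundary (`ufBoundary_of_bijective`, `ufBoundary_of_abs_sum_le`).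
-/

open Metric Set

noncomputable section

/-- A map between metric spaces is *coarse* if for every `r > 0` there is `s > 0` such that
points at distance `< r` are mapped to points at distance `< s`. -/
def CoarseMap {X Y : Type*} [MetricSpace X] [MetricSpace Y] (f : X → Y) : Prop :=
  ∀ r : ℝ, 0 < r → ∃ s : ℝ, 0 < s ∧ ∀ x z : X, dist x z < r → dist (f x) (f z) < s

/-- Two maps into a metric space are *close* if they are at uniformly bounded distance. -/
def CloseMaps {X Y : Type*} [MetricSpace Y] (f g : X → Y) : Prop :=
  ∃ C : ℝ, ∀ x : X, dist (f x) (g x) ≤ C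

/-- A coarse map is a *coarse equivalence* if it has a coarse inverse up to closeness. -/
def CoarseEquivMap {X Y : Type*} [MetricSpace X] [MetricSpace Y] (f : X → Y) : Prop :=
  CoarseMap f ∧ ∃ g : Y → X, CoarseMap g ∧ CloseMaps (g ∘ f) id ∧ CloseMaps (f ∘ g) id

/-- Two metric spaces are *bijectively coarsely equivalent* if there is a bijective coarse
equivalence between them. -/
def BijCoarseEquiv (X Y : Type*) [MetricSpace X] [MetricSpace Y] : Prop :=
  ∃ f : X → Y, Function.Bijective f ∧ CoarseEquivMap f

/-- A metric space is *uniformly locally finite* if there is a uniform bound on the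
cardinality of balls of any fixed radius. -/
def IsULFSpace (X : Type*) [MetricSpace X] : Prop :=
  ∀ r : ℝ, 0 < r → ∃ N : ℕ, ∀ x : X,
    (Metric.closedBall x r).Finite ∧ (Metric.closedBall x r).ncard ≤ N

/-- A map is *uniformly finite-to-one* if preimages of singletons have uniformly bounded size. -/
def UnifFiniteToOne {X Y : Type*} (f : X → Y) : Prop :=
  ∃ m : ℕ, ∀ y : Y, (f ⁻¹' {y}).Finite ∧ (f ⁻¹' {y}).ncard ≤ m

/-- A u.l.f. metric space is *non-amenable* if for every `C > 1` there is `r > 0` such that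
`|N_r(S)| ≥ C |S|` for every finite `S`. -/
def NonAmenableSpace (X : Type*) [MetricSpace X] : Prop :=
  ∀ C : ℝ, 1 < C → ∃ r : ℝ, 0 < r ∧ ∀ S : Set X, S.Finite →
    C * (S.ncard : ℝ) ≤ (({x : X | ∃ s ∈ S, dist x s ≤ r}).ncard : ℝ)

/-- The outer `r`-boundary of a set `A`: points outside `A` at distance at most `r` from `A`. -/
def outerBdry {X : Type*} [MetricSpace X] (r : ℝ) (A : Set X) : Set X :=
  {x : X | x ∉ A ∧ ∃ a ∈ A, dist x a ≤ r}

/-- `Xn` is a partition of the ambient space into finite pieces whose mutual distances tend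
to infinity: a *coarse disjoint union*. -/
def IsCDU {X : Type*} [MetricSpace X] (Xn : ℕ → Set X) : Prop :=
  (∀ x : X, ∃! n : ℕ, x ∈ Xn n) ∧ (∀ n : ℕ, (Xn n).Finite) ∧
  ∀ R : ℝ, ∃ k : ℕ, ∀ m n : ℕ, m ≠ n → k ≤ m + n →
    ∀ x ∈ Xn m, ∀ y ∈ Xn n, R ≤ dist x y

/-- A subset is `t`-connected if any two of its points are joined by a chain in the subset
with consecutive distances at most `t`. -/
def TConnSubset {X : Type*} [MetricSpace X] (t : ℝ) (S : Set X) : Prop :=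
  ∀ x ∈ S, ∀ y ∈ S, ∃ (m : ℕ) (c : ℕ → X), c 0 = x ∧ c m = y ∧
    (∀ i : ℕ, i ≤ m → c i ∈ S) ∧ ∀ i : ℕ, i < m → dist (c i) (c (i + 1)) ≤ t

/-- The metric restricted to `S` is the shortest path metric of the graph on `S` whose edges
are the pairs at distance `1`: any two points of `S` are joined by a chain of unit-distance
steps in `S` whose length realizes their distance. -/
def GraphMetricOn {X : Type*} [MetricSpace X] (S : Set X) : Prop :=
  ∀ x ∈ S, ∀ y ∈ S, ∃ (m : ℕ) (c : ℕ → X), dist x y = (m : ℝ) ∧ c 0 = x ∧ c m = y ∧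
    (∀ i : ℕ, i ≤ m → c i ∈ S) ∧ ∀ i : ℕ, i < m → dist (c i) (c (i + 1)) = 1

/-- `S` is a `(k,h)`-expander graph (with its shortest path metric): vertex degrees are at
most `k` and `|∂ A| ≥ h (1 - |A|/|S|) |A|` for every `A ⊆ S`. -/
def ExpanderGraphSet {X : Type*} [MetricSpace X] (k : ℕ) (h : ℝ) (S : Set X) : Prop :=
  GraphMetricOn S ∧
  (∀ x ∈ S, ({z : X | z ∈ S ∧ z ≠ x ∧ dist z x ≤ 1}).ncard ≤ k) ∧
  ∀ A : Set X, A ⊆ S →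
    h * (1 - (A.ncard : ℝ) / (S.ncard : ℝ)) * (A.ncard : ℝ) ≤ ((outerBdry 1 A ∩ S).ncard : ℝ)

/-- `Xn` is a sequence of expander graphs: all are `(k,h)`-expanders for fixed `k, h` and
their cardinalities tend to infinity. -/
def ExpanderSeq {X : Type*} [MetricSpace X] (Xn : ℕ → Set X) : Prop :=
  ∃ (k : ℕ) (h : ℝ), 0 < h ∧ (∀ n : ℕ, ExpanderGraphSet k h (Xn n)) ∧
    Filter.Tendsto (fun n => (Xn n).ncard) Filter.atTop Filter.atTop

/-- `a : X → ℤ` is a boundary in uniformly finite homology: `a x = ∑_z (b x z - b z x)` for a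
bounded `b` supported at bounded distance from the diagonal. -/
def UFBoundary {X : Type*} [MetricSpace X] (a : X → ℤ) : Prop :=
  ∃ (b : X → X → ℤ) (K : ℤ) (r : ℝ),
    (∀ x z : X, |b x z| ≤ K) ∧ (∀ x z : X, b x z ≠ 0 → dist x z ≤ r) ∧
    ∀ x : X, a x = ∑ᶠ z : X, (b x z - b z x)

/-- The disjoint union of `m x` labelled points over each `x : X`: the multiset on `X` with
multiplicity function `m`. -/
abbrev Fibered {X : Type*} (m : X → ℕ) : Type _ := Σ x : X, Fin (m x)

/-- Hall's theorem for multisets: the counting condition on subsets of `X` suffices, since the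
neighbourhood of a set of labelled points depends only on its projection to `X` and contains all
the labelled points over its own projection. -/
lemma fibered_exists_injective {X : Type*} [DecidableEq X] (m n : X → ℕ) (B : X → Finset X)
    (h : ∀ A : Finset X, ∑ x ∈ A, m x ≤ ∑ z ∈ A.biUnion B, n z) :
    ∃ f : Fibered m → Fibered n, Function.Injective f ∧ ∀ p, (f p).1 ∈ B p.1 := by
  classical
  obtain ⟨f, hf, hfB⟩ := (Finset.all_card_le_biUnion_card_iff_exists_injective
    (fun p : Fibered m => (B p.1).sigma (fun z => (Finset.univ : Finset (Fin (n z)))))).1 (by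
      intro S
      have h1 : S ⊆ (S.image Sigma.fst).sigma (fun z => (Finset.univ : Finset (Fin (m z)))) := by
        intro p hp
        simp only [Finset.mem_sigma, Finset.mem_univ, and_true]
        exact Finset.mem_image_of_mem _ hp
      have h2 : S.biUnion (fun p : Fibered m =>
          (B p.1).sigma (fun z => (Finset.univ : Finset (Fin (n z))))) =
          ((S.image Sigma.fst).biUnion B).sigma
            (fun z => (Finset.univ : Finset (Fin (n z)))) := by
        ext q
        simp only [Finset.mem_biUnion, Finset.mem_sigma, Finset.mem_univ, and_true,
          Finset.mem_image, exists_exists_and_eq_and]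
      rw [h2]
      refine (Finset.card_le_card h1).trans ?_
      simpa [Finset.card_sigma] using h (S.image Sigma.fst))
  refine ⟨f, hf, fun p => ?_⟩
  simpa using hfB p

/-- Sorting the `m x` labelled points over `x` according to their value under `f`. -/
lemma sum_ncard_fibers {X : Type*} (m : X → ℕ) (f : Fibered m → X) (x : X) (s : Finset X)
    (hs : ∀ p : Fibered m, p.1 = x → f p ∈ s) :
    ∑ z ∈ s, {p : Fibered m | p.1 = x ∧ f p = z}.ncard = m x := by
  classical
  have key := Finset.card_eq_sum_card_fiberwise (f := fun i : Fin (m x) => f ⟨x, i⟩)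
    (s := Finset.univ) (t := s) (fun i _ => hs ⟨x, i⟩ rfl)
  rw [Finset.card_univ, Fintype.card_fin] at key
  conv_rhs => rw [key]
  refine Finset.sum_congr rfl fun z _ => ?_
  have : {p : Fibered m | p.1 = x ∧ f p = z} =
      Sigma.mk x '' ((Finset.univ.filter fun i : Fin (m x) => f ⟨x, i⟩ = z : Finset _) :
        Set (Fin (m x))) := by
    ext ⟨y, i⟩
    simp only [Set.mem_ofPred_eq, Set.mem_image, Finset.coe_filter, Finset.mem_univ, true_and]
    constructor
    · rintro ⟨rfl, h⟩
      exact ⟨i, h, rfl⟩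
    · rintro ⟨j, hj, he⟩
      cases he
      exact ⟨rfl, hj⟩
  rw [this, Set.ncard_image_of_injective _ sigma_mk_injective, Set.ncard_coe_finset]

/-- A bijection at bounded distance between two multisets of bounded multiplicity exhibits the
difference of the multiplicities as a boundary: `b x z` counts the labelled points over `x`
sent to labelled points over `z`. -/
lemma ufBoundary_of_bijective {X : Type*} [MetricSpace X] (hX : IsULFSpace X) {t : ℝ}
    (ht : 0 < t) (m n : X → ℕ) (L : ℕ) (hm : ∀ x, m x ≤ L)
    (h : Fibered m → Fibered n) (hh : Function.Bijective h)
    (hd : ∀ p, dist p.1 (h p).1 ≤ t) :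
    UFBoundary (fun x => (m x : ℤ) - n x) := by
  classical
  obtain ⟨N, hN⟩ := hX t ht
  have hfin : ∀ x z, {p : Fibered m | p.1 = x ∧ (h p).1 = z}.ncard ≠ 0 → dist x z ≤ t := by
    intro x z hxz
    obtain ⟨p, rfl, rfl⟩ := Set.nonempty_of_ncard_ne_zero hxz
    exact hd p
  have hrow : ∀ x (s : Finset X), (∀ z, dist z x ≤ t → z ∈ s) →
      ∑ z ∈ s, {p : Fibered m | p.1 = x ∧ (h p).1 = z}.ncard = m x := by
    intro x s hs
    refine sum_ncard_fibers m (fun p => (h p).1) x s ?_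
    rintro p rfl
    exact hs _ (by rw [dist_comm]; exact hd p)
  let e := Equiv.ofBijective h hh
  have hcol : ∀ x (s : Finset X), (∀ z, dist z x ≤ t → z ∈ s) →
      ∑ z ∈ s, {p : Fibered m | p.1 = z ∧ (h p).1 = x}.ncard = n x := by
    intro x s hs
    rw [← sum_ncard_fibers n (fun q => (e.symm q).1) x s]
    · refine Finset.sum_congr rfl fun z _ => ?_
      rw [← Set.ncard_image_of_injective _ e.injective]
      congr 1
      ext q
      rw [e.image_eq_preimage_symm]
      have : h (e.symm q) = q := e.apply_symm_apply q
      simp [this, and_comm]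
    · rintro q rfl
      refine hs _ ?_
      have := hd (e.symm q)
      rwa [show h (e.symm q) = q from e.apply_symm_apply q] at this
  refine ⟨fun x z => ({p : Fibered m | p.1 = x ∧ (h p).1 = z}.ncard : ℤ), L, t, ?_, ?_, ?_⟩
  · intro x z
    rw [abs_of_nonneg (Int.natCast_nonneg _)]
    have h1 := hrow x (insert z (hN x).1.toFinset) (by
      intro w hw
      exact Finset.mem_insert_of_mem (by simpa using hw))
    have h2 := Finset.single_le_sum
      (f := fun z => {p : Fibered m | p.1 = x ∧ (h p).1 = z}.ncard)
      (fun _ _ => Nat.zero_le _) (Finset.mem_insert_self z (hN x).1.toFinset)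
    have h3 := hm x
    exact_mod_cast (h2.trans h1.le).trans h3
  · intro x z hxz
    exact hfin x z (Int.natCast_ne_zero.1 hxz)
  · intro x
    have hs : ∀ z, dist z x ≤ t → z ∈ (hN x).1.toFinset := fun z hz => by simpa using hz
    rw [finsum_eq_sum_of_support_subset (s := (hN x).1.toFinset), Finset.sum_sub_distrib]
    · beta_reduce
      rw [← hrow x _ hs, ← hcol x _ hs]
      push_cast
      rfl
    · intro z hz
      rw [Set.Finite.coe_toFinset, Metric.mem_closedBall]
      by_contra hzx
      apply hz
      have h1 : {p : Fibered m | p.1 = x ∧ (h p).1 = z}.ncard = 0 := by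
        by_contra h0
        exact hzx (by rw [dist_comm]; exact hfin x z h0)
      have h2 : {p : Fibered m | p.1 = z ∧ (h p).1 = x}.ncard = 0 := by
        by_contra h0
        exact hzx (hfin z x h0)
      simp [h1, h2]

/-- The flow out of a finite set `A` only involves pairs in `A × ∂_t A`, of which there are at
most `N |∂_t A|`. -/
lemma abs_sum_le_of_ufBoundary {X : Type*} [MetricSpace X] (hX : IsULFSpace X) {a : X → ℤ}
    (h : UFBoundary a) : ∃ t C : ℝ, 0 < t ∧ 0 < C ∧ ∀ A : Finset X,
      |(↑(∑ x ∈ A, a x) : ℝ)| ≤ C * ((outerBdry t (A : Set X)).ncard : ℝ) := by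
  classical
  obtain ⟨b, K, r, hK, hr, hab⟩ := h
  have ht : (0 : ℝ) < max r 1 := lt_max_of_lt_right one_pos
  set t := max r 1 with htdef
  obtain ⟨N, hN⟩ := hX t ht
  -- The summand `1` only makes the constant positive when `X` or `b` is trivial.
  refine ⟨t, 2 * |(K : ℝ)| * N + 1, ht, by positivity, fun A => ?_⟩
  have hBfin : (outerBdry t (A : Set X)).Finite := by
    refine (A.finite_toSet.biUnion fun x _ => (hN x).1).subset ?_
    rintro x ⟨-, y, hy, hxy⟩
    exact Set.mem_biUnion hy hxy
  set D := hBfin.toFinset with hD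
  let c : X → X → ℤ := fun x z => b x z - b z x
  have hc0 : ∀ x z, c x z ≠ 0 → dist z x ≤ t := by
    intro x z hxz
    by_contra hlt
    have h1 : b x z = 0 := by
      by_contra h0
      exact hlt (by rw [dist_comm]; exact (hr x z h0).trans (le_max_left _ _))
    have h2 : b z x = 0 := by
      by_contra h0
      exact hlt ((hr z x h0).trans (le_max_left _ _))
    exact hxz (by simp [c, h1, h2])
  have hcK : ∀ x z, |c x z| ≤ 2 * |K| := by
    intro x z
    have h1 := hK x z
    have h2 := hK z x
    have h3 := abs_sub (b x z) (b z x)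
    have h4 := le_abs_self K
    simp only [c]
    linarith
  have hdisj : Disjoint A D := by
    rw [Finset.disjoint_left]
    intro x hx hxD
    exact ((Set.Finite.mem_toFinset _).1 hxD).1 hx
  have hsum : ∑ x ∈ A, a x = ∑ z ∈ D, ∑ x ∈ A, c x z := by
    have h1 : ∀ x ∈ A, a x = ∑ z ∈ A, c x z + ∑ z ∈ D, c x z := by
      intro x hx
      rw [hab x, finsum_eq_sum_of_support_subset (s := A ∪ D), Finset.sum_union hdisj]
      intro z hz
      by_cases hzA : z ∈ A
      · simp [hzA]
      · have : z ∈ D := (Set.Finite.mem_toFinset _).2 ⟨hzA, x, hx, hc0 x z hz⟩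
        simp [this]
    have h2 : ∑ x ∈ A, ∑ z ∈ A, c x z = 0 := by
      simp only [c, Finset.sum_sub_distrib]
      rw [Finset.sum_comm, sub_self]
    rw [Finset.sum_congr rfl h1, Finset.sum_add_distrib, h2, zero_add, Finset.sum_comm]
  have hz : ∀ z ∈ D, |∑ x ∈ A, c x z| ≤ 2 * |K| * N := by
    intro z _
    have h1 : ∑ x ∈ A, c x z = ∑ x ∈ A.filter (fun x => dist x z ≤ t), c x z := by
      symm
      refine Finset.sum_filter_of_ne fun x _ hne => ?_
      rw [dist_comm]
      exact hc0 x z hne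
    have h2 : (A.filter (fun x => dist x z ≤ t)).card ≤ N := by
      refine le_trans ?_ (hN z).2
      rw [← Set.ncard_coe_finset]
      refine Set.ncard_le_ncard ?_ (hN z).1
      intro x hx
      simpa using (Finset.mem_filter.1 hx).2
    rw [h1]
    calc |∑ x ∈ A.filter (fun x => dist x z ≤ t), c x z|
        ≤ ∑ x ∈ A.filter (fun x => dist x z ≤ t), |c x z| := Finset.abs_sum_le_sum_abs _ _
      _ ≤ (A.filter (fun x => dist x z ≤ t)).card • (2 * |K|) :=
        Finset.sum_le_card_nsmul _ _ _ fun x _ => hcK x z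
      _ = 2 * |K| * ((A.filter (fun x => dist x z ≤ t)).card : ℤ) := by
        rw [nsmul_eq_mul, mul_comm]
      _ ≤ 2 * |K| * N := by gcongr
  have hcard : (outerBdry t (A : Set X)).ncard = D.card := Set.ncard_eq_toFinset_card _ hBfin
  have hint : |∑ x ∈ A, a x| ≤ 2 * |K| * N * D.card := by
    rw [hsum]
    refine (Finset.abs_sum_le_sum_abs _ _).trans ?_
    refine (Finset.sum_le_card_nsmul _ _ _ hz).trans ?_
    rw [nsmul_eq_mul, mul_comm]
  have hreal : |((∑ x ∈ A, a x : ℤ) : ℝ)| ≤ 2 * |(K : ℝ)| * N * D.card := by exact_mod_cast hint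
  rw [hcard]
  have : (0 : ℝ) ≤ D.card := by positivity
  linarith

/-- Hall's condition is checked with `A ∪ ∂_t A` as the neighbourhood of `A`: out of the constant
multiplicity `M` it reads `M |A| ≤ M |A| + ∑_A a + ∑_{∂_t A} (M + a)`, and into it
`M |A| + ∑_A a ≤ M |A| + M |∂_t A|`. -/
lemma ufBoundary_of_abs_sum_le {X : Type*} [MetricSpace X] (hX : IsULFSpace X)
    {a : X → ℤ} (hab : ∃ K : ℤ, ∀ x : X, |a x| ≤ K) {t C : ℝ} (ht : 0 < t)
    (hA : ∀ A : Finset X,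
      |(↑(∑ x ∈ A, a x) : ℝ)| ≤ C * ((outerBdry t (A : Set X)).ncard : ℝ)) :
    UFBoundary a := by
  classical
  obtain ⟨K, hK⟩ := hab
  obtain ⟨N, hN⟩ := hX t ht
  let c : ℕ := ⌈C⌉₊
  let k : ℕ := K.toNat
  have hk : ∀ x, |a x| ≤ k := fun x => (hK x).trans (Int.self_le_toNat K)
  -- `M ≥ c` serves the injection into `X × Fin M`, and `M - k ≥ c` the one out of it.
  let M : ℕ := c + k
  let m : X → ℕ := fun x => (M + a x).toNat
  have hm : ∀ x, (m x : ℤ) = M + a x := by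
    intro x
    have := abs_le.1 (hk x)
    simp only [m, M]
    omega
  let B : X → Finset X := fun x => (hN x).1.toFinset
  have hB : ∀ x z, z ∈ B x ↔ dist z x ≤ t := fun x z => by simp [B]
  have hnbhd : ∀ A : Finset X, ∃ D : Finset X, Disjoint A D ∧ A.biUnion B = A ∪ D ∧
      |∑ x ∈ A, a x| ≤ c * D.card := by
    intro A
    have hD : ((A.biUnion B \ A : Finset X) : Set X) = outerBdry t (A : Set X) := by
      ext z
      simp only [Finset.coe_sdiff, Set.mem_sdiff, Finset.mem_coe, Finset.mem_biUnion, hB,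
        outerBdry, Set.mem_ofPred_eq]
      tauto
    refine ⟨A.biUnion B \ A, Finset.disjoint_sdiff, ?_, ?_⟩
    · rw [Finset.union_sdiff_of_subset]
      intro x hx
      exact Finset.mem_biUnion.2 ⟨x, hx, (hB x x).2 (by simpa using ht.le)⟩
    · have h1 := hA A
      rw [← hD, Set.ncard_coe_finset] at h1
      have h2 : |((∑ x ∈ A, a x : ℤ) : ℝ)| ≤ c * ((A.biUnion B \ A).card : ℝ) :=
        h1.trans (by gcongr; exact Nat.le_ceil C)
      exact_mod_cast h2
  obtain ⟨f, hf, hfB⟩ := fibered_exists_injective m (fun _ => M) B (by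
    intro A
    obtain ⟨D, hdisj, hAD, hle⟩ := hnbhd A
    rw [hAD, Finset.sum_union hdisj]
    zify
    simp only [hm, Finset.sum_add_distrib, Finset.sum_const, nsmul_eq_mul]
    have h1 := le_abs_self (∑ x ∈ A, a x)
    have h2 : (0 : ℤ) ≤ D.card * k := by positivity
    simp only [M]
    push_cast
    linarith)
  obtain ⟨g, hg, hgB⟩ := fibered_exists_injective (fun _ => M) m B (by
    intro A
    obtain ⟨D, hdisj, hAD, hle⟩ := hnbhd A
    rw [hAD, Finset.sum_union hdisj]
    zify
    simp only [hm, Finset.sum_add_distrib, Finset.sum_const, nsmul_eq_mul]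
    have h1 := neg_abs_le (∑ x ∈ A, a x)
    have h2 : D.card • (-(k : ℤ)) ≤ ∑ x ∈ D, a x :=
      Finset.card_nsmul_le_sum _ _ _ fun x _ => (abs_le.1 (hk x)).1
    rw [nsmul_eq_mul] at h2
    simp only [M]
    push_cast
    linarith)
  obtain ⟨h, hh, hd⟩ := Function.Embedding.schroeder_bernstein_of_rel hf hg
    (fun p q => dist p.1 q.1 ≤ t)
    (fun p => by rw [dist_comm]; exact (hB _ _).1 (hfB p))
    (fun q => (hB _ _).1 (hgB q))
  have := ufBoundary_of_bijective hX ht m (fun _ => M) (M + k) (by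
    intro x
    have h1 := hm x
    have h2 := abs_le.1 (hk x)
    omega) h hh hd
  convert this using 2 with x
  rw [hm]
  ring

/-- (Whyte's criterion.) For a u.l.f. metric space `X` and a bounded
`a : X → ℤ`, `a` is a boundary iff there are `t > 0` and `C > 0` such that
`|∑_{x ∈ A} a x| ≤ C |∂_t(A)|` for every finite `A ⊆ X`. -/
theorem stmt5 {X : Type*} [MetricSpace X] (hX : IsULFSpace X)
    (a : X → ℤ) (hab : ∃ K : ℤ, ∀ x : X, |a x| ≤ K) :
    UFBoundary a ↔ ∃ t C : ℝ, 0 < t ∧ 0 < C ∧ ∀ A : Finset X,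
      |(↑(∑ x ∈ A, a x) : ℝ)| ≤ C * ((outerBdry t (A : Set X)).ncard : ℝ) :=
  ⟨abs_sum_le_of_ufBoundary hX, fun ⟨_, _, ht, _, h⟩ => ufBoundary_of_abs_sum_le hX hab ht h⟩
end
end

section
/- Let t_0 ≥ 0, let X be a uniformly locally finite metric space which is a coarse disjoint union X = ⊔_n X_n of t_0-connected finite metric spaces, and let a : X → ℤ be a bounded function such that Σ_{x∈X_n} a(x) = 0 for all n ∈ ℕ. Then the following are equivalent: (1) a is a boundary ([a] = 0 in H_0^{uf}(X)); (2) there exist t > 0, C > 0 and n_0 ∈ ℕ such that |Σ_{x∈A} a(x)| ≤ C·|∂_t(A)| for all n ≥ n_0 and all A ⊆ X_n. -/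
/-!
The equivalence is the integral max-flow min-cut theorem applied to each piece `Xₙ`.

If `a` is the divergence of a bounded kernel `b` of propagation at most `r`, then in
`∑_{x ∈ A} a x` the contributions of pairs inside `A` cancel (`sum_sum_antisymm`). What remains is
a sum over pairs `(x, z)` with `x ∈ A` and `z` in the outer `r`-boundary of `A`, and each such `z`
lies in boundedly many of these pairs by uniform local finiteness (`boundary_imp_isoperimetric`).

Conversely, join two points of `Xₙ` by an edge when they are at distance at most `max t t₀`, and
give every edge the same capacity `M`. For large `n` the pieces are far apart, so the
`t`-boundary of `A ⊆ Xₙ` stays inside `Xₙ` and the isoperimetric inequality bounds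
`∑_{x ∈ A} a x` by `M` times the number of boundary points, hence by the capacity of the cut `A`.
For the finitely many remaining `n`, connectedness gives at least one boundary point for each
proper nonempty `A`, so a large enough `M` works (`exists_uniform_cut_bound`). An augmenting path
argument (`exists_flow`) then yields an integral flow on each `Xₙ` with divergence `a`, bounded by
`M`, and the positive parts of these flows together form the required `b`.
-/

open Metric Set

noncomputable section

/-! ### Integral flows on a finite set -/

/-- An integral flow on the finite set `S` along the edges of the relation `E`, with capacity `M`
on every edge in both directions; `f x z` is the net amount sent from `x` to `z`, so `f` is
antisymmetric. -/
structure IsFlow {V : Type*} (E : V → V → Prop) (S : Finset V) (M : ℤ) (f : V → V → ℤ) :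
    Prop where
  antisymm : ∀ x z, f x z = -f z x
  le : ∀ x z, f x z ≤ M
  edge : ∀ x z, f x z ≠ 0 → E x z
  mem : ∀ x z, f x z ≠ 0 → x ∈ S

/-- The residual relation of a flow: an edge of `S` along which one more unit can be sent. -/
def Residual {V : Type*} (E : V → V → Prop) (S : Finset V) (M : ℤ) (f : V → V → ℤ)
    (x z : V) : Prop :=
  x ∈ S ∧ z ∈ S ∧ E x z ∧ f x z < M

lemma sum_sum_antisymm {V : Type*} (A : Finset V) (f : V → V → ℤ)
    (hf : ∀ x z, f x z = -f z x) : ∑ x ∈ A, ∑ z ∈ A, f x z = 0 := by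
  have h : ∑ x ∈ A, ∑ z ∈ A, f x z = -∑ x ∈ A, ∑ z ∈ A, f x z := by
    conv_rhs => rw [Finset.sum_comm]
    simp only [← Finset.sum_neg_distrib]
    exact Finset.sum_congr rfl fun x _ => Finset.sum_congr rfl fun z _ => hf x z
  omega

open Classical in
/-- Sending one unit along a residual edge with distinct endpoints gives a flow again. The only
residual edges that can disappear are those starting at `x`. -/
lemma push_edge {V : Type*} {E : V → V → Prop} (hE : ∀ x z, E x z → E z x) {S : Finset V}
    {M : ℤ} {f : V → V → ℤ} (hf : IsFlow E S M f) {x y : V} (hxy : x ≠ y)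
    (hr : Residual E S M f x y) :
    ∃ g, IsFlow E S M g ∧
      (∀ v ∈ S, ∑ z ∈ S, g v z =
        ∑ z ∈ S, f v z + (if v = x then 1 else 0) - (if v = y then 1 else 0)) ∧
      ∀ u v, u ≠ x → g u v ≤ f u v := by
  obtain ⟨hx, hy, hexy, hlt⟩ := hr
  refine ⟨fun u v => f u v + (if u = x ∧ v = y then 1 else 0) - (if u = y ∧ v = x then 1 else 0),
    ⟨?_, ?_, ?_, ?_⟩, ?_, ?_⟩
  · intro u v
    have := hf.antisymm u v
    grind
  · intro u v
    have := hf.le u v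
    grind
  · intro u v h
    by_cases h1 : f u v = 0
    · have := hE x y hexy
      grind
    · exact hf.edge u v h1
  · intro u v h
    by_cases h1 : f u v = 0
    · grind
    · exact hf.mem u v h1
  · intro v hv
    dsimp only
    rw [Finset.sum_sub_distrib, Finset.sum_add_distrib]
    congr 1
    · congr 1
      by_cases h : v = x <;> simp [h, hy]
    · by_cases h : v = y <;> simp [h, hx]
  · intro u v hu
    grind

open Classical in
/-- Augmentation along a residual path from `x` to `y`: one unit is sent from `x` to `y`. If the
path returns to `x`, the initial loop is dropped; otherwise a unit is sent along the first edge
and the rest of the path, which avoids `x`, stays residual. -/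
lemma push_path {V : Type*} {E : V → V → Prop} (hE : ∀ x z, E x z → E z x) {S : Finset V}
    {M : ℤ} (y : V) (k : ℕ) : ∀ (f : V → V → ℤ), IsFlow E S M f →
    ∀ (x : V) (c : ℕ → V), c 0 = x → c k = y →
    (∀ i < k, Residual E S M f (c i) (c (i + 1))) →
    ∃ g, IsFlow E S M g ∧
      (∀ v ∈ S, ∑ z ∈ S, g v z =
        ∑ z ∈ S, f v z + (if v = x then 1 else 0) - (if v = y then 1 else 0)) := by
  induction k using Nat.strong_induction_on with
  | _ k ih =>
    intro f hf x c h0 hk hc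
    by_cases hloop : ∃ i, 0 < i ∧ i ≤ k ∧ c i = x
    · obtain ⟨i, hi, hik, hix⟩ := hloop
      refine ih (k - i) (by omega) f hf x (fun j => c (i + j)) (by simpa using hix) ?_ ?_
      · simp only [Nat.add_sub_cancel' hik]
        exact hk
      · intro j hj
        exact hc (i + j) (by omega)
    · push Not at hloop
      rcases Nat.eq_zero_or_pos k with rfl | hkpos
      · refine ⟨f, hf, fun v _ => ?_⟩
        have : x = y := h0.symm.trans hk
        subst this
        ring
      · have hne : x ≠ c 1 := fun h => hloop 1 one_pos hkpos h.symm
        have hr := hc 0 hkpos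
        rw [h0] at hr
        obtain ⟨g, hg, hdiv, hle⟩ := push_edge hE hf hne hr
        obtain ⟨g', hg', hdiv'⟩ := ih (k - 1) (by omega) g hg (c 1) (fun j => c (j + 1)) rfl
          (by simp only [Nat.sub_add_cancel hkpos]; exact hk)
          (by
            intro i hi
            obtain ⟨h1, h2, h3, h4⟩ := hc (i + 1) (by omega)
            exact ⟨h1, h2, h3,
              lt_of_le_of_lt (hle _ _ (hloop (i + 1) (by omega) (by omega))) h4⟩)
        refine ⟨g', hg', fun v hv => ?_⟩
        rw [hdiv' v hv, hdiv v hv]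
        ring

lemma exists_path_of_reflTransGen {V : Type*} {R : V → V → Prop} {x y : V}
    (h : Relation.ReflTransGen R x y) :
    ∃ (k : ℕ) (c : ℕ → V), c 0 = x ∧ c k = y ∧ ∀ i < k, R (c i) (c (i + 1)) := by
  induction h using Relation.ReflTransGen.head_induction_on with
  | refl => exact ⟨0, fun _ => y, rfl, rfl, by simp⟩
  | @head u v huv _ ih =>
    obtain ⟨k, c, h0, hk, hc⟩ := ih
    refine ⟨k + 1, fun i => Nat.casesOn i u c, rfl, hk, ?_⟩
    rintro (_ | i) hi
    · simpa [h0] using huv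
    · exact hc i (by omega)

open Classical in
/-- The max-flow min-cut step: if no residual edge leaves `A`, then every edge leaving `A` is
saturated, so the net flow out of `A` is at least `M` times the number of boundary points. -/
lemma cut_le_of_closed {V : Type*} {E : V → V → Prop} {S : Finset V}
    {M : ℤ} (hM : 0 ≤ M) {f : V → V → ℤ} (hf : IsFlow E S M f) {A : Finset V} (hA : A ⊆ S)
    (hcl : ∀ x ∈ A, ∀ z, Residual E S M f x z → z ∈ A) :
    M * (((S \ A).filter fun z => ∃ x ∈ A, E x z).card : ℤ) ≤ ∑ x ∈ A, ∑ z ∈ S, f x z := by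
  have hsplit : ∑ x ∈ A, ∑ z ∈ S, f x z = ∑ z ∈ S \ A, ∑ x ∈ A, f x z := by
    rw [Finset.sum_comm (s := S \ A), ← add_zero (∑ x ∈ A, ∑ z ∈ S \ A, f x z),
      ← sum_sum_antisymm A f hf.antisymm, ← Finset.sum_add_distrib]
    exact Finset.sum_congr rfl fun x _ => (Finset.sum_sdiff hA).symm
  have hsat : ∀ x ∈ A, ∀ z ∈ S \ A, E x z → f x z = M := by
    intro x hx z hz hxz
    rw [Finset.mem_sdiff] at hz
    by_contra hne
    exact hz.2 (hcl x hx z ⟨hA hx, hz.1, hxz, lt_of_le_of_ne (hf.le x z) hne⟩)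
  have hnonneg : ∀ x ∈ A, ∀ z ∈ S \ A, 0 ≤ f x z := by
    intro x hx z hz
    by_cases h : f x z = 0
    · exact h.ge
    · rw [hsat x hx z hz (hf.edge x z h)]
      exact hM
  rw [hsplit]
  calc M * (((S \ A).filter fun z => ∃ x ∈ A, E x z).card : ℤ)
      = ∑ z ∈ (S \ A).filter fun z => ∃ x ∈ A, E x z, M := by
        rw [Finset.sum_const, nsmul_eq_mul, mul_comm]
    _ ≤ ∑ z ∈ (S \ A).filter fun z => ∃ x ∈ A, E x z, ∑ x ∈ A, f x z := by
        refine Finset.sum_le_sum fun z hz => ?_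
        obtain ⟨hz, x, hx, hxz⟩ := Finset.mem_filter.1 hz
        rw [← hsat x hx z hz hxz]
        exact Finset.single_le_sum (f := fun x => f x z) (fun u hu => hnonneg u hu z hz) hx
    _ ≤ ∑ z ∈ S \ A, ∑ x ∈ A, f x z :=
        Finset.sum_le_sum_of_subset_of_nonneg (Finset.filter_subset _ _)
          fun z hz _ => Finset.sum_nonneg fun x hx => hnonneg x hx z hz

open Classical in
/-- Integral max-flow min-cut: if every cut has enough boundary points, the demand `a` is the
divergence of an integral flow of capacity `M`. -/
lemma exists_flow {V : Type*} {E : V → V → Prop} (hE : ∀ x z, E x z → E z x) (S : Finset V)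
    {M : ℤ} (hM : 0 ≤ M) (a : V → ℤ) (h0 : ∑ x ∈ S, a x = 0)
    (hcut : ∀ A ⊆ S, ∑ x ∈ A, a x ≤
      M * (((S \ A).filter fun z => ∃ x ∈ A, E x z).card : ℤ)) :
    ∃ f, IsFlow E S M f ∧ ∀ x ∈ S, ∑ z ∈ S, f x z = a x := by
  -- Induction on the total defect of a flow; the zero flow provides the starting point.
  suffices H : ∀ (n : ℕ) (f : V → V → ℤ), IsFlow E S M f →
      ∑ x ∈ S, (a x - ∑ z ∈ S, f x z).natAbs ≤ n →
      ∃ f, IsFlow E S M f ∧ ∀ x ∈ S, ∑ z ∈ S, f x z = a x from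
    H _ (fun _ _ => 0) ⟨by simp, fun _ _ => hM, by simp, by simp⟩ le_rfl
  intro n
  induction n with
  | zero =>
    intro f hf hn
    refine ⟨f, hf, fun x hx => ?_⟩
    have := (Finset.sum_eq_zero_iff.1 (Nat.le_zero.1 hn)) x hx
    omega
  | succ n ih =>
    intro f hf hn
    by_cases hdone : ∀ x ∈ S, ∑ z ∈ S, f x z = a x
    · exact ⟨f, hf, hdone⟩
    have hsum : ∑ x ∈ S, (a x - ∑ z ∈ S, f x z) = 0 := by
      rw [Finset.sum_sub_distrib, h0, sum_sum_antisymm S f hf.antisymm, sub_zero]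
    obtain ⟨x, hx, hxpos⟩ : ∃ x ∈ S, 0 < a x - ∑ z ∈ S, f x z := by
      by_contra! hneg
      apply hdone
      intro x hx
      have := (Finset.sum_eq_zero_iff_of_nonpos hneg).1 hsum x hx
      omega
    set A : Finset V := S.filter fun v => Relation.ReflTransGen (Residual E S M f) x v with hAdef
    have hAS : A ⊆ S := Finset.filter_subset _ _
    by_cases hy : ∃ y ∈ A, a y - ∑ z ∈ S, f y z < 0
    · obtain ⟨y, hyA, hyneg⟩ := hy
      obtain ⟨hyS, hxy⟩ := Finset.mem_filter.1 hyA
      obtain ⟨k, c, hc0, hck, hc⟩ := exists_path_of_reflTransGen hxy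
      obtain ⟨g, hg, hdiv⟩ := push_path hE y k f hf x c hc0 hck hc
      refine ih g hg (Nat.le_of_lt_succ (lt_of_lt_of_le ?_ hn))
      have hne : x ≠ y := by
        rintro rfl
        omega
      refine Finset.sum_lt_sum (fun v hv => ?_) ⟨x, hx, ?_⟩
      · rw [hdiv v hv]
        by_cases hvx : v = x
        · subst hvx
          rw [if_pos rfl, if_neg hne]
          omega
        · by_cases hvy : v = y
          · subst hvy
            rw [if_neg hvx, if_pos rfl]
            omega
          · rw [if_neg hvx, if_neg hvy]
            omega
      · rw [hdiv x hx, if_pos rfl, if_neg hne]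
        omega
    · push Not at hy
      exfalso
      have hclosed := cut_le_of_closed hM hf hAS (fun u hu z huz =>
        Finset.mem_filter.2 ⟨huz.2.1, (Finset.mem_filter.1 hu).2.tail huz⟩)
      have hxA : x ∈ A := Finset.mem_filter.2 ⟨hx, .refl⟩
      have hpos : 0 < ∑ v ∈ A, (a v - ∑ z ∈ S, f v z) :=
        Finset.sum_pos' hy ⟨x, hxA, hxpos⟩
      rw [Finset.sum_sub_distrib] at hpos
      have := hcut A hAS
      omega

/-! ### Boundaries satisfy the isoperimetric inequality -/

lemma outerBdry_finite {X : Type*} [MetricSpace X] (hX : IsULFSpace X) {r : ℝ} (hr : 0 < r)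
    {A : Set X} (hA : A.Finite) : (outerBdry r A).Finite := by
  obtain ⟨N, hN⟩ := hX r hr
  refine (hA.biUnion fun x _ => (hN x).1).subset ?_
  rintro z ⟨-, x, hx, hzx⟩
  exact Set.mem_biUnion hx (Metric.mem_closedBall.2 hzx)

open Classical in
lemma boundary_imp_isoperimetric {X : Type*} [MetricSpace X] (hX : IsULFSpace X) {a : X → ℤ}
    (ha : UFBoundary a) :
    ∃ t C : ℝ, 0 < t ∧ 0 < C ∧ ∀ A : Set X, A.Finite →
      |(↑(∑ᶠ x ∈ A, a x) : ℝ)| ≤ C * ((outerBdry t A).ncard : ℝ) := by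
  obtain ⟨b, K, r, hK, hr, hab⟩ := ha
  have hr1 : 0 < max r 1 := lt_max_of_lt_right one_pos
  obtain ⟨N, hN⟩ := hX _ hr1
  refine ⟨max r 1, ((N * (2 * |K|) + 1 : ℤ) : ℝ), hr1, by norm_cast; positivity, ?_⟩
  intro A hA
  have hB := outerBdry_finite hX hr1 hA
  lift A to Finset X using hA
  set B := hB.toFinset with hBdef
  rw [Set.ncard_eq_toFinset_card _ hB]
  set g : X → X → ℤ := fun x z => b x z - b z x with hg
  have hganti : ∀ x z, g x z = -g z x := fun x z => by simp only [hg]; ring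
  have hgle : ∀ x z, |g x z| ≤ 2 * |K| := by
    intro x z
    have h1 := hK x z
    have h2 := hK z x
    have h3 := le_abs_self K
    have h4 := abs_sub (b x z) (b z x)
    simp only [hg]
    linarith
  have hgsupp : ∀ x z, g x z ≠ 0 → dist x z ≤ max r 1 := by
    intro x z h
    refine le_trans ?_ (le_max_left r 1)
    by_cases h1 : b x z = 0
    · by_cases h2 : b z x = 0
      · simp [hg, h1, h2] at h
      · rw [dist_comm]
        exact hr z x h2
    · exact hr x z h1
  have hdisj : Disjoint A B := by
    rw [Finset.disjoint_left]
    intro x hx hxB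
    exact ((hB.mem_toFinset).1 hxB).1 hx
  have hax : ∀ x ∈ A, a x = ∑ z ∈ A, g x z + ∑ z ∈ B, g x z := by
    intro x hx
    rw [hab x, ← Finset.sum_union hdisj]
    refine finsum_eq_sum_of_support_subset _ fun z hz => ?_
    by_cases hzA : z ∈ A
    · simp [hzA]
    · have hzB : z ∈ B := (hB.mem_toFinset).2
        ⟨by simpa using hzA, x, hx, by rw [dist_comm]; exact hgsupp x z hz⟩
      simp [hzB]
  have hsum : ∑ x ∈ A, a x = ∑ z ∈ B, ∑ x ∈ A, g x z := by
    rw [Finset.sum_congr rfl hax, Finset.sum_add_distrib, sum_sum_antisymm A g hganti, zero_add,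
      Finset.sum_comm]
  have hrow : ∀ z ∈ B, |∑ x ∈ A, g x z| ≤ N * (2 * |K|) + 1 := by
    intro z _
    set D := (hN z).1.toFinset with hD
    have hcard : D.card ≤ N := by
      rw [hD, ← Set.ncard_eq_toFinset_card _ (hN z).1]
      exact (hN z).2
    have h1 : ∑ x ∈ A, g x z = ∑ x ∈ A ∩ D, g x z := by
      symm
      refine Finset.sum_subset Finset.inter_subset_left fun x hx hxD => ?_
      by_contra hne
      exact hxD (Finset.mem_inter.2 ⟨hx, ((hN z).1.mem_toFinset).2
        (Metric.mem_closedBall.2 (hgsupp x z hne))⟩)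
    calc |∑ x ∈ A, g x z| ≤ ∑ x ∈ A ∩ D, |g x z| := by
          rw [h1]
          exact Finset.abs_sum_le_sum_abs _ _
      _ ≤ ((A ∩ D).card : ℤ) * (2 * |K|) := by
          rw [← nsmul_eq_mul]
          exact Finset.sum_le_card_nsmul _ _ _ fun x _ => hgle x z
      _ ≤ N * (2 * |K|) := by
          refine mul_le_mul_of_nonneg_right ?_ (by positivity)
          exact_mod_cast (Finset.card_le_card Finset.inter_subset_right).trans hcard
      _ ≤ N * (2 * |K|) + 1 := by omega
  rw [show ∑ᶠ x ∈ (A : Set X), a x = ∑ x ∈ A, a x from finsum_mem_coe_finset a A, hsum]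
  have hfinal : |∑ z ∈ B, ∑ x ∈ A, g x z| ≤ (N * (2 * |K|) + 1) * (B.card : ℤ) :=
    calc |∑ z ∈ B, ∑ x ∈ A, g x z| ≤ ∑ z ∈ B, |∑ x ∈ A, g x z| :=
          Finset.abs_sum_le_sum_abs _ _
      _ ≤ B.card • (N * (2 * |K|) + 1) := Finset.sum_le_card_nsmul _ _ _ hrow
      _ = (N * (2 * |K|) + 1) * (B.card : ℤ) := by rw [nsmul_eq_mul, mul_comm]
  exact_mod_cast hfinal

/-! ### The isoperimetric inequality yields a boundary -/

/-- A proper nonempty subset of a `t`-connected set has a boundary point inside the set. -/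
lemma exists_mem_bdry_of_tconn {X : Type*} [MetricSpace X] {t : ℝ} {S A : Set X}
    (hS : TConnSubset t S) (hA : A ⊆ S) (hne : A.Nonempty) (hproper : A ≠ S) :
    ∃ z ∈ S, z ∉ A ∧ ∃ x ∈ A, dist x z ≤ t := by
  obtain ⟨x, hx⟩ := hne
  obtain ⟨y, hyS, hyA⟩ := Set.exists_of_ssubset (hA.ssubset_of_ne hproper)
  obtain ⟨m, c, hc0, hcm, hcS, hct⟩ := hS x (hA hx) y hyS
  by_contra! hno
  have hall : ∀ i ≤ m, c i ∈ A := by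
    intro i
    induction i with
    | zero => intro _; rwa [hc0]
    | succ i ih =>
      intro hi
      by_contra hmem
      exact absurd (hct i (by omega)) (not_le.2 (hno _ (hcS _ hi) hmem _ (ih (by omega))))
  exact hyA (hcm ▸ hall m le_rfl)

open Classical in
/-- One radius and one capacity serve all pieces: in the tail by the isoperimetric inequality,
on the finitely many remaining pieces by connectedness and finiteness. -/
lemma exists_uniform_cut_bound {X : Type*} [MetricSpace X] {t0 : ℝ}
    {Xn : ℕ → Set X} (hcdu : IsCDU Xn)
    (hconn : ∀ n : ℕ, TConnSubset t0 (Xn n))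
    {a : X → ℤ} (hab : ∃ K : ℤ, ∀ x : X, |a x| ≤ K) (S : ℕ → Finset X)
    (hS : ∀ n, (S n : Set X) = Xn n) (hzero : ∀ n : ℕ, ∑ x ∈ S n, a x = 0)
    {t C : ℝ} (hC : 0 < C) {n0 : ℕ}
    (hiso : ∀ n : ℕ, n0 ≤ n → ∀ A ⊆ Xn n,
      |(↑(∑ᶠ x ∈ A, a x) : ℝ)| ≤ C * ((outerBdry t A).ncard : ℝ)) :
    ∃ M : ℤ, 0 ≤ M ∧ ∀ n, ∀ A ⊆ S n, ∑ x ∈ A, a x ≤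
      M * (((S n \ A).filter fun z => ∃ x ∈ A, dist x z ≤ max t t0).card : ℤ) := by
  obtain ⟨K, hK⟩ := hab
  obtain ⟨k, hk⟩ := hcdu.2.2 (t + 1)
  set n1 := max n0 k with hn1
  have hterm : ∀ n, 0 ≤ |K| * ((S n).card : ℤ) := fun n => by positivity
  have hT : 0 ≤ ∑ n ∈ Finset.range n1, |K| * ((S n).card : ℤ) :=
    Finset.sum_nonneg fun n _ => hterm n
  have hCc : 0 ≤ ⌈C⌉ := Int.ceil_nonneg hC.le
  refine ⟨⌈C⌉ + ∑ n ∈ Finset.range n1, |K| * ((S n).card : ℤ), by omega, fun n A hA => ?_⟩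
  set B := (S n \ A).filter fun z => ∃ x ∈ A, dist x z ≤ max t t0 with hB
  by_cases hn : n1 ≤ n
  · have hAX : (A : Set X) ⊆ Xn n := by
      rw [← hS]
      exact_mod_cast hA
    have hbdry : outerBdry t (A : Set X) ⊆ (B : Set X) := by
      rintro z ⟨hzA, x, hx, hzx⟩
      have hzS : z ∈ Xn n := by
        obtain ⟨m, hm, -⟩ := hcdu.1 z
        by_contra hz
        have hmn : m ≠ n := by
          rintro rfl
          exact hz hm
        have := hk m n hmn (by omega) z hm x (hAX hx)
        linarith
      have hzS' : z ∈ S n := by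
        rw [← hS] at hzS
        exact_mod_cast hzS
      refine Finset.mem_coe.2 (Finset.mem_filter.2 ⟨Finset.mem_sdiff.2 ⟨hzS', by simpa using hzA⟩,
        x, by simpa using hx, ?_⟩)
      rw [dist_comm]
      exact hzx.trans (le_max_left _ _)
    have hcard : (outerBdry t (A : Set X)).ncard ≤ B.card := by
      rw [← Set.ncard_coe_finset B]
      exact Set.ncard_le_ncard hbdry B.finite_toSet
    have h1 := hiso n (by omega) A hAX
    rw [show ∑ᶠ x ∈ (A : Set X), a x = ∑ x ∈ A, a x from finsum_mem_coe_finset a A] at h1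
    have h2 : ((∑ x ∈ A, a x : ℤ) : ℝ) ≤ ((⌈C⌉ * (B.card : ℤ) : ℤ) : ℝ) := by
      push_cast at h1 ⊢
      calc _ ≤ _ := le_abs_self _
        _ ≤ _ := h1
        _ ≤ (⌈C⌉ : ℝ) * (B.card : ℝ) :=
          mul_le_mul (Int.le_ceil C) (by exact_mod_cast hcard) (by positivity)
            (by exact_mod_cast hCc)
    have h3 : ∑ x ∈ A, a x ≤ ⌈C⌉ * (B.card : ℤ) := by exact_mod_cast h2
    refine h3.trans (mul_le_mul_of_nonneg_right (by omega) (by positivity))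
  · rcases A.eq_empty_or_nonempty with hAe | hAne
    · rw [hAe, Finset.sum_empty]
      exact mul_nonneg (by omega) (Int.natCast_nonneg _)
    by_cases hAS : A = S n
    · rw [hAS, hzero n]
      exact mul_nonneg (by omega) (Int.natCast_nonneg _)
    obtain ⟨z, hz, hzA, x, hx, hxz⟩ := exists_mem_bdry_of_tconn
      (A := (A : Set X)) (S := (S n : Set X))
      ((hS n).symm ▸ hconn n) (by exact_mod_cast hA) (by exact_mod_cast hAne)
      (by exact_mod_cast hAS)
    have hBpos : (1 : ℤ) ≤ (B.card : ℤ) := by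
      have : 0 < B.card := Finset.card_pos.2 ⟨z, Finset.mem_filter.2
        ⟨Finset.mem_sdiff.2 ⟨Finset.mem_coe.1 hz, fun h => hzA (Finset.mem_coe.2 h)⟩,
          x, Finset.mem_coe.1 hx, hxz.trans (le_max_right _ _)⟩⟩
      omega
    have h1 : ∑ x ∈ A, a x ≤ |K| * ((S n).card : ℤ) :=
      calc ∑ x ∈ A, a x ≤ A.card • |K| := Finset.sum_le_card_nsmul _ _ _ fun x _ =>
            (le_abs_self _).trans ((hK x).trans (le_abs_self K))
        _ = |K| * (A.card : ℤ) := by rw [nsmul_eq_mul, mul_comm]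
        _ ≤ |K| * ((S n).card : ℤ) := by
          refine mul_le_mul_of_nonneg_left ?_ (abs_nonneg K)
          exact_mod_cast Finset.card_le_card hA
    have h2 : |K| * ((S n).card : ℤ) ≤ ∑ n ∈ Finset.range n1, |K| * ((S n).card : ℤ) :=
      Finset.single_le_sum (f := fun n => |K| * ((S n).card : ℤ)) (fun n _ => hterm n)
        (Finset.mem_range.2 (by omega))
    calc ∑ x ∈ A, a x ≤ ⌈C⌉ + ∑ n ∈ Finset.range n1, |K| * ((S n).card : ℤ) := by omega
      _ ≤ _ := le_mul_of_one_le_right (by omega) hBpos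

/-- Let `X = ⊔ₙ Xₙ` be a u.l.f. coarse disjoint union of `t₀`-connected
finite metric spaces and let `a : X → ℤ` be bounded with `∑_{x ∈ Xₙ} a x = 0` for all `n`.
Then `a` is a boundary iff there are `t > 0`, `C > 0` and `n₀` such that
`|∑_{x ∈ A} a x| ≤ C |∂_t(A)|` for all `n ≥ n₀` and all `A ⊆ Xₙ`. -/
theorem stmt6 {X : Type*} [MetricSpace X] (t0 : ℝ) (ht0 : 0 ≤ t0)
    (hX : IsULFSpace X) (Xn : ℕ → Set X) (hcdu : IsCDU Xn)
    (hconn : ∀ n : ℕ, TConnSubset t0 (Xn n))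
    (a : X → ℤ) (hab : ∃ K : ℤ, ∀ x : X, |a x| ≤ K)
    (hzero : ∀ n : ℕ, (∑ᶠ x ∈ Xn n, a x) = 0) :
    UFBoundary a ↔ ∃ t C : ℝ, 0 < t ∧ 0 < C ∧ ∃ n0 : ℕ, ∀ n : ℕ, n0 ≤ n → ∀ A ⊆ Xn n,
      |(↑(∑ᶠ x ∈ A, a x) : ℝ)| ≤ C * ((outerBdry t A).ncard : ℝ) := by
  constructor
  · intro h
    obtain ⟨t, C, ht, hC, H⟩ := boundary_imp_isoperimetric hX h
    exact ⟨t, C, ht, hC, 0, fun n _ A hA => H A ((hcdu.2.1 n).subset hA)⟩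
  · rintro ⟨t, C, ht, hC, n0, hiso⟩
    classical
    set S : ℕ → Finset X := fun n => (hcdu.2.1 n).toFinset with hSdef
    have hS : ∀ n, (S n : Set X) = Xn n := fun n => (hcdu.2.1 n).coe_toFinset
    have hmem : ∀ n x, x ∈ S n ↔ x ∈ Xn n := fun n x => (hcdu.2.1 n).mem_toFinset
    have hz : ∀ n, ∑ x ∈ S n, a x = 0 := by
      intro n
      rw [← hzero n, ← hS n, finsum_mem_coe_finset]
    obtain ⟨M, hM, hcut⟩ := exists_uniform_cut_bound hcdu hconn hab S hS hz hC hiso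
    have hflow : ∀ n, ∃ f, IsFlow (fun x z : X => dist x z ≤ max t t0) (S n) M f ∧
        ∀ x ∈ S n, ∑ z ∈ S n, f x z = a x := fun n =>
      exists_flow (fun x z h => by rwa [dist_comm]) (S n) hM a (hz n) (hcut n)
    choose f hf hdiv using hflow
    choose idx hidx huniq using hcdu.1
    have hfz : ∀ n x z, f n x z ≠ 0 → idx x = n ∧ idx z = n := by
      intro n x z h
      have h' : f n z x ≠ 0 := by
        rw [(hf n).antisymm z x]
        exact neg_ne_zero.2 h
      exact ⟨(huniq x n ((hmem n x).1 ((hf n).mem x z h))).symm,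
        (huniq z n ((hmem n z).1 ((hf n).mem z x h'))).symm⟩
    -- Taking positive parts turns the antisymmetric flow into a kernel `b` with
    -- `b x z - b z x = f x z`, avoiding a factor of two in the divergence.
    refine ⟨fun x z => max (f (idx x) x z) 0, M, max t t0, ?_, ?_, ?_⟩
    · intro x z
      rw [abs_of_nonneg (le_max_right _ _)]
      exact max_le ((hf _).le x z) hM
    · intro x z h
      refine (hf (idx x)).edge x z fun h0 => h ?_
      simp [h0]
    · intro x
      have hdiff : ∀ z, max (f (idx x) x z) 0 - max (f (idx z) z x) 0 = f (idx x) x z := by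
        intro z
        have hzx : f (idx z) z x = -f (idx x) x z := by
          by_cases h : idx z = idx x
          · rw [h]
            exact (hf _).antisymm z x
          · have h1 : f (idx z) z x = 0 := by
              by_contra hne
              exact h (hfz _ _ _ hne).2.symm
            have h2 : f (idx x) x z = 0 := by
              by_contra hne
              exact h (hfz _ _ _ hne).2
            rw [h1, h2, neg_zero]
        rw [hzx]
        omega
      simp only [hdiff]
      rw [← hdiv (idx x) x ((hmem _ _).2 (hidx x))]
      refine (finsum_eq_sum_of_support_subset _ fun z hzs => ?_).symm
      rw [hS, ← (hfz _ _ _ hzs).2]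
      exact hidx z
end
end

section
/- Let X be a uniformly locally finite metric space which is a coarse disjoint union X = ⊔_n X_n of finite metric spaces, and let a : X → ℤ be a bounded function. If a is a boundary ([a] = 0 in H_0^{uf}(X)), then there is n_0 ∈ ℕ such that Σ_{n<n_0} Σ_{x∈X_n} a(x) = 0 and Σ_{x∈X_n} a(x) = 0 for all n ≥ n_0. -/
/-!
If a finite set `S` lies at distance greater than the propagation of `b` from its complement,
then `b` has no mass between `S` and `Sᶜ`, so the sum of `a x = ∑ z, (b x z - b z x)` over `S`
is the sum of an antisymmetric function over `S × S`, which vanishes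
(`sum_eq_zero_of_decoupled`). In a coarse disjoint union, pieces `Xₘ ≠ Xₙ` with `m + n ≥ n₀` are
this far apart once `n₀` is large. This applies both to `S = Xₙ` for `n ≥ n₀` and to
`S = ⋃_{n < n₀} Xₙ`.
-/

open Metric Set

noncomputable section

/-- A boundary sums to zero over any finite set `S` such that the bounding chain `b` vanishes
on all pairs joining `S` to its complement. -/
theorem sum_eq_zero_of_decoupled {X : Type*} (a : X → ℤ) (b : X → X → ℤ)
    (hab : ∀ x : X, a x = ∑ᶠ z : X, (b x z - b z x)) (S : Finset X)
    (hS : ∀ x ∈ S, ∀ z ∉ S, b x z = 0 ∧ b z x = 0) : ∑ x ∈ S, a x = 0 := by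
  have h : ∀ x ∈ S, a x = ∑ z ∈ S, (b x z - b z x) := by
    intro x hx
    rw [hab x]
    apply finsum_eq_sum_of_support_subset
    intro z hz
    by_contra hzS
    obtain ⟨h₁, h₂⟩ := hS x hx z hzS
    exact hz (by simp [h₁, h₂])
  rw [Finset.sum_congr rfl h]
  simp only [Finset.sum_sub_distrib]
  rw [Finset.sum_comm, sub_self]

/-- If `X = ⊔ₙ Xₙ` is a u.l.f. coarse disjoint union of finite metric spaces
and the bounded function `a : X → ℤ` is a boundary, then there is `n₀` with
`∑_{n < n₀} ∑_{x ∈ Xₙ} a x = 0` and `∑_{x ∈ Xₙ} a x = 0` for all `n ≥ n₀`. -/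
theorem stmt7 {X : Type*} [MetricSpace X] (hX : IsULFSpace X)
    (Xn : ℕ → Set X) (hcdu : IsCDU Xn)
    (a : X → ℤ) (hab : ∃ K : ℤ, ∀ x : X, |a x| ≤ K)
    (hbd : UFBoundary a) :
    ∃ n0 : ℕ, (∑ n ∈ Finset.range n0, ∑ᶠ x ∈ Xn n, a x) = 0 ∧
      ∀ n : ℕ, n0 ≤ n → (∑ᶠ x ∈ Xn n, a x) = 0 := by
  classical
  obtain ⟨hpart, hfin, hfar⟩ := hcdu
  obtain ⟨b, K, r, -, hr, hsum⟩ := hbd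
  obtain ⟨k, hk⟩ := hfar (r + 1)
  have hzero : ∀ m n : ℕ, m ≠ n → k ≤ m + n → ∀ x ∈ Xn m, ∀ z ∈ Xn n,
      b x z = 0 ∧ b z x = 0 := by
    intro m n hmn hkmn x hx z hz
    have hd := hk m n hmn hkmn x hx z hz
    constructor
    · by_contra hb
      linarith [hr x z hb]
    · by_contra hb
      linarith [hr z x hb, dist_comm x z]
  have hT : ∀ n, ∑ᶠ x ∈ Xn n, a x = ∑ x ∈ (hfin n).toFinset, a x :=
    fun n => finsum_mem_eq_finite_toFinset_sum a (hfin n)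
  simp only [hT]
  refine ⟨k, ?_, ?_⟩
  · rw [← Finset.sum_biUnion]
    · apply sum_eq_zero_of_decoupled a b hsum
      intro x hx z hz
      simp only [Finset.mem_biUnion, Finset.mem_range, Set.Finite.mem_toFinset] at hx hz
      obtain ⟨m, hm, hxm⟩ := hx
      obtain ⟨n, hzn, -⟩ := hpart z
      have hkn : k ≤ n := by
        by_contra hlt
        exact hz ⟨n, by omega, hzn⟩
      exact hzero m n (by omega) (by omega) x hxm z hzn
    · intro m _ n _ hmn
      rw [Function.onFun, Finset.disjoint_left]
      intro x hxm hxn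
      rw [Set.Finite.mem_toFinset] at hxm hxn
      exact hmn ((hpart x).unique hxm hxn)
  · intro n hn
    apply sum_eq_zero_of_decoupled a b hsum
    intro x hx z hz
    rw [Set.Finite.mem_toFinset] at hx hz
    obtain ⟨m, hzm, -⟩ := hpart z
    have hne : n ≠ m := by
      rintro rfl
      exact hz hzm
    exact hzero n m hne (by omega) x hx z hzm
end
end

section
/- Let X and Y be uniformly locally finite metric spaces with Y = ⊔_n Y_n a coarse disjoint union of finite metric spaces. If f : X → Y is a uniformly finite-to-one coarse map that is close to an injective map, then there is n_0 ∈ ℕ such that Σ_{n<n_0} |f⁻¹(Y_n)| ≤ Σ_{n<n_0} |Y_n| and |f⁻¹(Y_n)| ≤ |Y_n| for all n ≥ n_0. -/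
/-!
Let `g` be injective with `dist (f x) (g x) ≤ C`, and let `k` be such that distinct pieces
`Yₘ`, `Yₙ` with `k ≤ m + n` are at distance at least `C + 1`. Then `f x` and `g x` lie in the
same piece as soon as one of the two pieces has index at least `k`. Hence `g` injects
`f⁻¹(Yₙ)` into `Yₙ` for every `n ≥ k`, and injects `⋃_{n < k} f⁻¹(Yₙ)` into `⋃_{n < k} Yₙ`,
so `n₀ = k` works. All preimages `f⁻¹(Yₙ)` and pieces `Yₙ` are finite, so `Set.ncard` is the
actual cardinality throughout.
-/

open Metric Set

noncomputable section

/-- Comparison of the total cardinalities of two disjoint families of finite sets along a map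
that is injective and sends the union of the first into the union of the second. -/
theorem sum_ncard_le_of_injective {X Y : Type*} (s : Finset ℕ) (A : ℕ → Set X) (B : ℕ → Set Y)
    (hA : ∀ i j x, x ∈ A i → x ∈ A j → i = j) (hAfin : ∀ n, (A n).Finite)
    (hB : ∀ i j y, y ∈ B i → y ∈ B j → i = j) (hBfin : ∀ n, (B n).Finite)
    (g : X → Y) (hg : Function.Injective g)
    (hmaps : ∀ n ∈ s, ∀ x ∈ A n, ∃ m ∈ s, g x ∈ B m) :
    ∑ n ∈ s, (A n).ncard ≤ ∑ n ∈ s, (B n).ncard := by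
  classical
  have hdisjA : (s : Set ℕ).PairwiseDisjoint fun n => (hAfin n).toFinset := by
    intro i _ j _ hij
    simp only [Function.onFun, Finset.disjoint_left, Set.Finite.mem_toFinset]
    exact fun x hi hj => hij (hA i j x hi hj)
  have hdisjB : (s : Set ℕ).PairwiseDisjoint fun n => (hBfin n).toFinset := by
    intro i _ j _ hij
    simp only [Function.onFun, Finset.disjoint_left, Set.Finite.mem_toFinset]
    exact fun y hi hj => hij (hB i j y hi hj)
  simp only [Set.ncard_eq_toFinset_card _ (hAfin _), Set.ncard_eq_toFinset_card _ (hBfin _)]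
  rw [← Finset.card_biUnion hdisjA, ← Finset.card_biUnion hdisjB]
  refine Finset.card_le_card_of_injOn g (fun x hx => ?_) hg.injOn
  simp only [Finset.coe_biUnion, Finset.mem_coe, Set.mem_iUnion, Set.Finite.coe_toFinset,
    exists_prop] at hx ⊢
  obtain ⟨n, hn, hxn⟩ := hx
  exact hmaps n hn x hxn

/-- If `Y = ⊔ₙ Yₙ` is a coarse disjoint union of finite metric spaces and
`f : X → Y` is a uniformly finite-to-one coarse map close to an injective map, then there is
`n₀` such that `∑_{n < n₀} |f⁻¹(Yₙ)| ≤ ∑_{n < n₀} |Yₙ|` and `|f⁻¹(Yₙ)| ≤ |Yₙ|` for all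
`n ≥ n₀`. -/
theorem stmt8 {X Y : Type*} [MetricSpace X] [MetricSpace Y]
    (hX : IsULFSpace X) (hY : IsULFSpace Y)
    (Yn : ℕ → Set Y) (hcdu : IsCDU Yn)
    (f : X → Y) (hf : CoarseMap f) (hfto : UnifFiniteToOne f)
    (hclose : ∃ g : X → Y, Function.Injective g ∧ CloseMaps f g) :
    ∃ n0 : ℕ,
      (∑ n ∈ Finset.range n0, (f ⁻¹' (Yn n)).ncard) ≤ (∑ n ∈ Finset.range n0, (Yn n).ncard) ∧
      ∀ n : ℕ, n0 ≤ n → (f ⁻¹' (Yn n)).ncard ≤ (Yn n).ncard := by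
  obtain ⟨g, hg, C, hC⟩ := hclose
  obtain ⟨hpart, hfin, hsep⟩ := hcdu
  obtain ⟨k, hk⟩ := hsep (C + 1)
  obtain ⟨_, hm⟩ := hfto
  have huniq : ∀ i j y, y ∈ Yn i → y ∈ Yn j → i = j :=
    fun i j y hi hj => (hpart y).unique hi hj
  have hpre : ∀ n, (f ⁻¹' Yn n).Finite := fun n =>
    (hfin n).preimage' fun y _ => (hm y).1
  have hsame : ∀ m n x, f x ∈ Yn m → g x ∈ Yn n → k ≤ m + n → m = n := by
    intro m n x hfx hgx hmn
    by_contra hne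
    have h1 := hk m n hne hmn _ hfx _ hgx
    have h2 := hC x
    linarith
  refine ⟨k, ?_, fun n hn => ?_⟩
  · refine sum_ncard_le_of_injective _ _ _ (fun i j x => huniq i j (f x)) hpre huniq hfin g hg ?_
    intro n hn x hx
    obtain ⟨m, hgm, -⟩ := hpart (g x)
    refine ⟨m, ?_, hgm⟩
    rw [Finset.mem_range] at hn ⊢
    by_contra hkm
    have := hsame n m x hx hgm (by omega)
    omega
  · refine Set.ncard_le_ncard_of_injOn g (fun x hx => ?_) hg.injOn (hfin n)
    obtain ⟨m, hgm, -⟩ := hpart (g x)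
    rwa [hsame n m x hx hgm (by omega)]
end
end

section
/- Let X and Y be finite sets with |X| = |Y| and let f : X → Y be any map. Then for all A ⊆ Y, ||A| − |f⁻¹(A)|| ≤ (max_{y∈Y} |f⁻¹({y})| − 1) · min{|A|, |Y ∖ A|}. -/
/-!
Write `M` for the largest fibre size, `a = |A|`, `b = |Aᶜ|`, `p = |f⁻¹(A)|`, `q = |f⁻¹(Aᶜ)|`.
Summing over fibres gives `p ≤ M a` and `q ≤ M b`, and `|X| = |Y|` gives `p + q = a + b`, so
`|a - p| = |b - q|`. If `2 ≤ M`, then `p - a ≤ (M - 1) a` and `a - p ≤ a ≤ (M - 1) a`, and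
likewise for `b` and `q`. If `M ≤ 1`, then `p ≤ a` and `q ≤ b` force `p = a`; when `M = 0` there
are no points in `X`, hence none in `Y`, and both sides vanish.
-/

/-- A preimage has at most (maximal fibre size) times as many points as the set itself. -/
lemma card_preimage_le_sup_mul {X Y : Type*} [Fintype X] [Fintype Y] [DecidableEq Y]
    (f : X → Y) (A : Finset Y) :
    (Finset.univ.filter (fun x : X => f x ∈ A)).card ≤
      (Finset.univ.sup (fun y : Y => (Finset.univ.filter (fun x : X => f x = y)).card))
        * A.card := by
  refine Finset.card_le_mul_card_image_of_maps_to (f := f) (by simp) _ fun y _ => ?_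
  exact (Finset.card_le_card (Finset.filter_subset_filter _ (Finset.subset_univ _))).trans
    (Finset.le_sup (f := fun y : Y => (Finset.univ.filter (fun x : X => f x = y)).card)
      (Finset.mem_univ y))

/-- For finite sets `X, Y` with `|X| = |Y|`, any `f : X → Y` and any
`A ⊆ Y`, `||A| - |f⁻¹(A)|| ≤ (max_y |f⁻¹({y})| - 1) · min{|A|, |Y ∖ A|}`. -/
theorem stmt10 {X Y : Type*} [Fintype X] [Fintype Y] [DecidableEq Y]
    (hcard : Fintype.card X = Fintype.card Y) (f : X → Y) (A : Finset Y) :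
    |(A.card : ℤ) - ((Finset.univ.filter (fun x : X => f x ∈ A)).card : ℤ)| ≤
      (((Finset.univ.sup
          (fun y : Y => (Finset.univ.filter (fun x : X => f x = y)).card) : ℕ) : ℤ) - 1)
        * min (A.card : ℤ) ((Aᶜ).card : ℤ) := by
  have hp := card_preimage_le_sup_mul f A
  have hq := card_preimage_le_sup_mul f Aᶜ
  have hpq : (Finset.univ.filter (fun x : X => f x ∈ A)).card +
      (Finset.univ.filter (fun x : X => f x ∈ Aᶜ)).card = A.card + Aᶜ.card := by
    simp only [Finset.mem_compl]
    rw [Finset.card_filter_add_card_filter_not, Finset.card_add_card_compl, Finset.card_univ,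
      hcard]
  generalize (Finset.univ.sup
    (fun y : Y => (Finset.univ.filter (fun x : X => f x = y)).card)) = M at *
  generalize (Finset.univ.filter (fun x : X => f x ∈ A)).card = p at *
  generalize (Finset.univ.filter (fun x : X => f x ∈ Aᶜ)).card = q at *
  generalize A.card = a at *
  generalize Aᶜ.card = b at *
  rcases M with _ | _ | M
  · have ha : a = 0 := by omega
    have hb : b = 0 := by omega
    have hp0 : p = 0 := by omega
    simp [ha, hb, hp0]
  · have hpa : p = a := by omega
    simp [hpa]
  · zify at hp hq hpq
    push_cast at hp hq ⊢
    have hMa : (0 : ℤ) ≤ M * a := by positivity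
    have hMb : (0 : ℤ) ≤ M * b := by positivity
    rw [abs_le]
    rcases min_choice (a : ℤ) b with h | h <;> rw [h] <;> constructor <;> nlinarith
end

section
/- Let X and Y be uniformly locally finite metric spaces and let f : X → Y be a coarse map. If there are an injective coarse map g : X → Y close to f and an injective coarse map h : Y → X close to a coarse inverse of f, then X and Y are bijectively coarsely equivalent. -/
/-! The Cantor–Schröder–Bernstein construction applied to the injections `g` and `h` produces a
bijection `F : X → Y` such that each `x` satisfies `F x = g x` or `h (F x) = x`. In the first case
`F x` is near `f x` because `g` is close to `f`. In the second, with `y = F x`, the point `h y = x`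
is near `f' y`, so `f x` is near `f (f' y)`, which is near `y`. Hence `F` is close to `f`, and
a map close to `f` is again coarse with the same coarse inverse `f'`. -/

open Metric Set

noncomputable section

/-- Coarseness gives a bound on the displacement of images valid for points at distance `≤ C`,
with no sign condition on `C`. -/
lemma CoarseMap.exists_dist_le {X Y : Type*} [MetricSpace X] [MetricSpace Y] {f : X → Y}
    (hf : CoarseMap f) (C : ℝ) : ∃ s : ℝ, ∀ x z : X, dist x z ≤ C → dist (f x) (f z) ≤ s := by
  obtain ⟨s, -, hs⟩ := hf (max C 0 + 1) (by positivity)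
  exact ⟨s, fun x z h => (hs x z (by linarith [le_max_left C 0])).le⟩

/-- Coarseness is invariant under closeness. -/
lemma CoarseMap.of_close {X Y : Type*} [MetricSpace X] [MetricSpace Y] {f F : X → Y}
    (hf : CoarseMap f) (hF : CloseMaps F f) : CoarseMap F := by
  obtain ⟨C, hC⟩ := hF
  intro r hr
  obtain ⟨s, hs0, hs⟩ := hf r hr
  refine ⟨2 * max C 0 + s, by positivity, fun x z h => ?_⟩
  have h1 := dist_triangle4 (F x) (f x) (f z) (F z)
  linarith [hC x, hC z, dist_comm (F z) (f z), hs x z h, le_max_left C 0]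

/-- (Schröder–Bernstein / König argument.) If `f : X → Y` is a coarse map
between u.l.f. metric spaces, `g : X → Y` is an injective coarse map close to `f`, and
`h : Y → X` is an injective coarse map close to a coarse inverse of `f`, then `X` and `Y`
are bijectively coarsely equivalent. -/
theorem stmt12 {X Y : Type*} [MetricSpace X] [MetricSpace Y]
    (hX : IsULFSpace X) (hY : IsULFSpace Y)
    (f : X → Y) (hf : CoarseMap f)
    (hg : ∃ g : X → Y, Function.Injective g ∧ CoarseMap g ∧ CloseMaps g f)
    (hh : ∃ (f' : Y → X) (h : Y → X),
      CoarseMap f' ∧ CloseMaps (f' ∘ f) id ∧ CloseMaps (f ∘ f') id ∧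
      Function.Injective h ∧ CoarseMap h ∧ CloseMaps h f') :
    BijCoarseEquiv X Y := by
  obtain ⟨g, hgi, -, A, hA⟩ := hg
  obtain ⟨f', h, hf', ⟨B, hB⟩, ⟨C, hC⟩, hhi, -, D, hD⟩ := hh
  simp only [Function.comp_apply, id_eq] at hB hC
  obtain ⟨s, hs⟩ := hf.exists_dist_le D
  -- The bijection is required to respect the relation `dist (f x) y ≤ E`, where `E` bounds
  -- both cases of the Schröder–Bernstein construction.
  obtain ⟨F, hFbij, hF⟩ := Function.Embedding.schroeder_bernstein_of_rel hgi hhi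
    (fun x y => dist (f x) y ≤ max A (s + C))
    (fun x => by
      rw [dist_comm]
      exact (hA x).trans (le_max_left _ _))
    (fun y => (dist_triangle (f (h y)) (f (f' y)) y).trans
      ((add_le_add (hs _ _ (hD y)) (hC y)).trans (le_max_right _ _)))
  obtain ⟨t, ht⟩ := hf'.exists_dist_le (max A (s + C))
  refine ⟨F, hFbij, hf.of_close ⟨_, fun x => by rw [dist_comm]; exact hF x⟩, f', hf',
    ⟨t + B, fun x => ?_⟩, ⟨max A (s + C) + C, fun y => ?_⟩⟩
  · refine (dist_triangle (f' (F x)) (f' (f x)) x).trans (add_le_add ?_ (hB x))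
    rw [dist_comm]
    exact ht _ _ (hF x)
  · refine (dist_triangle (F (f' y)) (f (f' y)) y).trans (add_le_add ?_ (hC y))
    rw [dist_comm]
    exact hF _
end
end

section
/- Let X be a uniformly locally finite metric space, Y any metric space, and f : X → Y a uniformly finite-to-one coarse map. If X is non-amenable, then there is an injective coarse map X → Y which is close to f. -/
/-!
If every fibre of `f` has at most `m` points, non-amenability with constant `m + 2` yields `r > 0`
with `(m + 2) |S| ≤ |N_r(S)| ≤ m |f (N_r(S))|`, hence `|S| ≤ |f (N_r(S))|`, for every finite `S`.
This is Hall's condition for the finite sets `f (B(x, r))`, which are finite because `X` is locally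
finite. Hall's theorem for infinite families of finite sets gives an injection `g` with
`g x ∈ f (B(x, r))`. Such a `g` is close to `f` because `f` is coarse, and a map close to a coarse
map is coarse.
-/

open Metric Set

noncomputable section

theorem CoarseMap.of_closeMaps {X Y : Type*} [MetricSpace X] [MetricSpace Y] {f g : X → Y}
    (hf : CoarseMap f) (hgf : CloseMaps g f) : CoarseMap g := by
  intro r hr
  obtain ⟨s, hs, h⟩ := hf r hr
  obtain ⟨C, hC⟩ := hgf
  refine ⟨s + 2 * |C|, by positivity, fun x z hxz => ?_⟩
  have h1 := h x z hxz
  have h2 := hC x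
  have h3 := hC z
  rw [dist_comm] at h3
  have h4 := dist_triangle4 (g x) (f x) (f z) (g z)
  have h5 := le_abs_self C
  linarith

/-- Hall's condition for the sets `f (B(x, r))` holds for some radius `r`. -/
theorem NonAmenableSpace.exists_hall_radius {X Y : Type*} [MetricSpace X] [DecidableEq Y]
    (hX : IsULFSpace X) (hna : NonAmenableSpace X) (f : X → Y) (hfto : UnifFiniteToOne f) :
    ∃ r : ℝ, 0 < r ∧ ∃ B : X → Finset X, (∀ x z, z ∈ B x ↔ dist z x ≤ r) ∧
      ∀ S : Finset X, S.card ≤ (S.biUnion fun x => (B x).image f).card := by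
  classical
  obtain ⟨m, hm⟩ := hfto
  -- `m + 2` rather than `m`, since the constant must exceed `1` even when `m ≤ 1`.
  obtain ⟨r, hr, h⟩ := hna (m + 2) (by linarith [Nat.cast_nonneg (α := ℝ) m])
  obtain ⟨N, hN⟩ := hX r hr
  have hB : ∀ x z, z ∈ (hN x).1.toFinset ↔ dist z x ≤ r := by simp
  refine ⟨r, hr, fun x => (hN x).1.toFinset, hB, fun S => ?_⟩
  have hS := h S S.finite_toSet
  have hnhd : {x : X | ∃ s ∈ (S : Set X), dist x s ≤ r} =
      (S.biUnion fun x => (hN x).1.toFinset : Finset X) := by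
    ext z
    simp
  rw [hnhd, Set.ncard_coe_finset, Set.ncard_coe_finset] at hS
  have hfib : (S.biUnion fun x => (hN x).1.toFinset).card ≤
      m * ((S.biUnion fun x => (hN x).1.toFinset).image f).card := by
    refine Finset.card_le_mul_card_image _ m fun y _ => ?_
    rw [← Set.ncard_coe_finset]
    refine (Set.ncard_le_ncard (fun z hz => ?_) (hm y).1).trans (hm y).2
    simpa using (Finset.mem_filter.1 hz).2
  rw [Finset.biUnion_image] at hfib
  have hS' : (m + 2) * S.card ≤ (S.biUnion fun x => (hN x).1.toFinset).card := by
    exact_mod_cast hS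
  by_contra! hlt
  have := Nat.mul_le_mul_left m hlt.le
  nlinarith

/-- If `X` is a non-amenable u.l.f. metric space, `Y` any metric space and
`f : X → Y` a uniformly finite-to-one coarse map, then there is an injective coarse map close
to `f`. -/
theorem stmt14 {X Y : Type*} [MetricSpace X] [MetricSpace Y]
    (hX : IsULFSpace X) (hna : NonAmenableSpace X)
    (f : X → Y) (hf : CoarseMap f) (hfto : UnifFiniteToOne f) :
    ∃ g : X → Y, Function.Injective g ∧ CoarseMap g ∧ CloseMaps g f := by
  classical
  obtain ⟨r, hr, B, hB, hall⟩ := hna.exists_hall_radius hX f hfto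
  obtain ⟨g, hg, hgB⟩ :=
    (Finset.all_card_le_biUnion_card_iff_exists_injective fun x => (B x).image f).1 hall
  -- `CoarseMap` speaks of strict inequalities, hence the radius `r + 1`.
  obtain ⟨s, -, hs⟩ := hf (r + 1) (by linarith)
  have hgf : CloseMaps g f := by
    refine ⟨s, fun x => ?_⟩
    obtain ⟨z, hz, hzx⟩ := Finset.mem_image.1 (hgB x)
    rw [← hzx]
    exact (hs z x (by linarith [(hB x z).1 hz])).le
  exact ⟨g, hg, hf.of_closeMaps hgf, hgf⟩
end
end

section
/- Let t > 0 and let X = ⊔_n X_n be a uniformly locally finite metric space which is a coarse disjoint union of finite t-connected metric spaces. Let T ∈ C*_u(X) be such that T − T² and T − T* are compact (i.e. T is a projection modulo the compact operators). Then TS − ST is compact for every S ∈ C*_u(X) if and only if there exists A ⊆ ℕ such that T − χ_{X_A} is compact, where X_A = ⊔_{n∈A} X_n and χ_{X_A} is the corresponding diagonal multiplication projection on ℓ²(X). -/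
/-!
The projection `χ_U` onto a union `U` of pieces commutes modulo compacts with operators of finite
propagation, since these connect only finitely many distinct pieces (`compact_comm_proj_union`);
commuting modulo compacts passes to norm limits and is unaffected by a compact perturbation. This
is one implication.

For the converse, let `T` commute modulo compacts with the uniform Roe algebra.

* `T` is diagonal modulo compacts (`compact_sub_diagPart`). Approximate `T` within `ε` by `T'` of
  propagation `r` and colour `X` with finitely many colours so that distinct points of the same
  colour are more than `r` apart (`exists_colouring`). The compression `Φ(a) = ∑ χ_j a χ_j` to the
  colour classes is contractive, sends `T'` to its diagonal part `E(T')`, and differs from the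
  identity at `T` by the compact operator `∑ [T, χ_j] χ_j`. So `T - E(T)` is within `2 ε` of a
  compact operator.
* Compact operators send the basis vectors to a family tending to `0` (`tendsto_compact_rdelta`).
  As `T - T²` is compact, the diagonal entries `d` of `T` satisfy `d - d² → 0`, so `d` is asymptotic
  to the indicator of a set `B` (`exists_approx_indicator`).
* If `B` split infinitely many pieces, `t`-connectedness would give in each of them two `t`-close
  points `x ∈ B` and `z ∉ B`. The partial translation moving each `z` to its `x` has propagation at
  most `t`, and its commutator with the diagonal operator of `d` has entries of modulus close to `1`
  at all these pairs, so it is not compact (`finite_split`).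

Hence `B` differs by a finite set from the union of the pieces it contains, and the diagonal
operator whose symbol is the difference of `d` and the indicator of that union is compact
(`compact_diagOp`).
-/

open Metric Set

noncomputable section

/-- The Hilbert space `ℓ²(X)`. -/
abbrev ell2 (X : Type*) : Type _ := lp (fun _ : X => ℂ) 2

/-- Bounded operators on `ℓ²(X)`. -/
abbrev BOps (X : Type*) : Type _ := ell2 X →L[ℂ] ell2 X

/-- The standard basis vector `δ_x` of `ℓ²(X)`. -/
def rdelta (X : Type*) [DecidableEq X] (x : X) : ell2 X := lp.single 2 x 1

/-- The matrix entry `⟨a δ_x, δ_z⟩` of an operator `a` on `ℓ²(X)`. -/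
def entryOf {X : Type*} [DecidableEq X] (a : BOps X) (x z : X) : ℂ :=
  @inner ℂ (ell2 X) _ (a (rdelta X x)) (rdelta X z)

/-- An operator on `ℓ²(X)` has finite propagation if its matrix entries vanish at pairs of
points at distance more than some `r`. -/
def HasFinProp {X : Type*} [MetricSpace X] [DecidableEq X] (a : BOps X) : Prop :=
  ∃ r : ℝ, ∀ x z : X, r < dist x z → entryOf a x z = 0

/-- The uniform Roe algebra of `X`, as a subset of `B(ℓ²(X))`: the norm closure of the set of
finite propagation operators. -/
def RoeSet (X : Type*) [MetricSpace X] [DecidableEq X] : Set (BOps X) :=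
  closure {a : BOps X | HasFinProp a}

/-- The uniform Roe algebras of `X` and `Y` are isomorphic as C*-algebras: there is a bijection
between them preserving addition, scalar multiplication, multiplication and adjoints. -/
def RoeIso (X Y : Type*) [MetricSpace X] [MetricSpace Y] [DecidableEq X] [DecidableEq Y] :
    Prop :=
  ∃ Φ : BOps X → BOps Y,
    Set.BijOn Φ (RoeSet X) (RoeSet Y) ∧
    (∀ a ∈ RoeSet X, ∀ b ∈ RoeSet X, Φ (a + b) = Φ a + Φ b) ∧
    (∀ (c : ℂ), ∀ a ∈ RoeSet X, Φ (c • a) = c • Φ a) ∧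
    (∀ a ∈ RoeSet X, ∀ b ∈ RoeSet X, Φ (a * b) = Φ a * Φ b) ∧
    (∀ a ∈ RoeSet X, Φ (star a) = star (Φ a))

open Filter Topology

section Helpers

variable {X : Type*}

/-! ### Weighted composition, diagonal and projection operators -/

/-- Partial-sum bound giving both that weighted composition preserves `ℓ²(X)` and that its norm is at
most the supremum of the weight. -/
lemma wcomp_sum_le {σ : X → X} {f : X → ℂ} {C : ℝ} (hC : 0 ≤ C) (hf : ∀ x, ‖f x‖ ≤ C)
    (hσ : InjOn σ {x | f x ≠ 0}) (g : ell2 X) (s : Finset X) :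
    ∑ x ∈ s, ‖f x * g (σ x)‖ ^ (2 : ENNReal).toReal ≤ (C * ‖g‖) ^ (2 : ENNReal).toReal := by
  classical
  have h2' : (0 : ℝ) < (2 : ENNReal).toReal := by simp
  calc ∑ x ∈ s, ‖f x * g (σ x)‖ ^ (2 : ENNReal).toReal
      = ∑ x ∈ s with f x ≠ 0, ‖f x * g (σ x)‖ ^ (2 : ENNReal).toReal := by
        refine (Finset.sum_filter_of_ne ?_).symm
        intro x _ hx h0
        apply hx
        simp [h0]
    _ ≤ ∑ x ∈ s with f x ≠ 0,
          C ^ (2 : ENNReal).toReal * ‖g (σ x)‖ ^ (2 : ENNReal).toReal := by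
        refine Finset.sum_le_sum fun x _ => ?_
        rw [norm_mul, Real.mul_rpow (norm_nonneg _) (norm_nonneg _)]
        gcongr
        exact hf x
    _ = C ^ (2 : ENNReal).toReal *
          ∑ y ∈ (s.filter fun x => f x ≠ 0).image σ, ‖g y‖ ^ (2 : ENNReal).toReal := by
        rw [Finset.sum_image, Finset.mul_sum]
        intro x hx y hy hxy
        exact hσ (by simpa using (Finset.mem_filter.1 hx).2)
          (by simpa using (Finset.mem_filter.1 hy).2) hxy
    _ ≤ (C * ‖g‖) ^ (2 : ENNReal).toReal := by
        rw [Real.mul_rpow hC (norm_nonneg _)]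
        gcongr
        exact lp.sum_rpow_le_norm_rpow h2' g _

lemma wcomp_mem {σ : X → X} {f : X → ℂ} (hf : ∃ C, ∀ x, ‖f x‖ ≤ C)
    (hσ : InjOn σ {x | f x ≠ 0}) (g : ell2 X) :
    Memℓp (fun x => f x * g (σ x)) 2 := by
  obtain ⟨C, hC⟩ := hf
  exact memℓp_gen' fun s => wcomp_sum_le (C := max C 0) (le_max_right _ _)
    (fun x => (hC x).trans (le_max_left _ _)) hσ g s

/-- The weighted composition operator `(W g) x = f x * g (σ x)`, for a bounded weight `f` and a
map `σ` which is injective where `f` does not vanish. It covers both multiplication operators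
(`σ = id`) and partial translations. -/
def wcomp (σ : X → X) (f : X → ℂ) (hf : ∃ C, ∀ x, ‖f x‖ ≤ C)
    (hσ : InjOn σ {x | f x ≠ 0}) : BOps X :=
  LinearMap.mkContinuousOfExistsBound
    { toFun := fun g => ⟨fun x => f x * g (σ x), wcomp_mem hf hσ g⟩
      map_add' := fun g h => by
        ext x
        exact mul_add (f x) (g (σ x)) (h (σ x))
      map_smul' := fun c g => by
        ext x
        simp [mul_left_comm] }
    (by
      obtain ⟨C, hC⟩ := hf
      exact ⟨max C 0, fun g => lp.norm_le_of_forall_sum_le (by simp) (by positivity)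
        fun s => wcomp_sum_le (C := max C 0) (le_max_right _ _)
          (fun x => (hC x).trans (le_max_left _ _)) hσ g s⟩)

lemma wcomp_apply (σ : X → X) (f : X → ℂ) (hf : ∃ C, ∀ x, ‖f x‖ ≤ C)
    (hσ : InjOn σ {x | f x ≠ 0}) (g : ell2 X) (x : X) :
    wcomp σ f hf hσ g x = f x * g (σ x) := rfl

/-- The operator of multiplication by a bounded function. -/
def diagOp (f : X → ℂ) (hf : ∃ C, ∀ x, ‖f x‖ ≤ C) : BOps X :=
  wcomp id f hf (injOn_id _)

lemma diagOp_apply (f : X → ℂ) (hf : ∃ C, ∀ x, ‖f x‖ ≤ C) (g : ell2 X) (x : X) :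
    diagOp f hf g x = f x * g x := rfl

lemma norm_diagOp_le {f : X → ℂ} (hf : ∃ C, ∀ x, ‖f x‖ ≤ C) {C : ℝ} (hC : 0 ≤ C)
    (h : ∀ x, ‖f x‖ ≤ C) : ‖diagOp f hf‖ ≤ C :=
  ContinuousLinearMap.opNorm_le_bound _ hC fun g =>
    lp.norm_le_of_forall_sum_le (by simp) (by positivity) fun s =>
      wcomp_sum_le hC h (injOn_id _) g s

open Classical in
/-- The diagonal projection `χ_B`. -/
def proj (B : Set X) : BOps X :=
  diagOp (fun x => if x ∈ B then 1 else 0) ⟨1, fun x => by split_ifs <;> simp⟩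

open Classical in
lemma proj_apply (B : Set X) (g : ell2 X) (x : X) :
    proj B g x = if x ∈ B then g x else 0 := by
  rw [proj, diagOp_apply]
  split_ifs <;> simp

lemma proj_proj (B : Set X) (g : ell2 X) : proj B (proj B g) = proj B g := by
  ext x
  simp only [proj_apply]
  split_ifs <;> rfl

lemma inner_proj (B : Set X) (g h : ell2 X) :
    @inner ℂ _ _ (proj B g) h = @inner ℂ _ _ g (proj B h) := by
  rw [lp.inner_eq_tsum, lp.inner_eq_tsum]
  refine tsum_congr fun x => ?_
  rw [proj_apply, proj_apply]
  split_ifs <;> simp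

variable [DecidableEq X]

lemma rdelta_apply (x z : X) : rdelta X x z = if z = x then 1 else 0 := by
  simp [rdelta, Pi.single_apply]

lemma norm_rdelta (x : X) : ‖rdelta X x‖ = 1 := by
  rw [rdelta, lp.norm_single (by simp)]
  simp

omit [DecidableEq X] in
lemma norm_coord_le (g : ell2 X) (x : X) : ‖g x‖ ≤ ‖g‖ :=
  lp.norm_apply_le_norm (by simp) g x

lemma diagOp_rdelta (f : X → ℂ) (hf : ∃ C, ∀ x, ‖f x‖ ≤ C) (x : X) :
    diagOp f hf (rdelta X x) = f x • rdelta X x := by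
  ext z
  rw [diagOp_apply, lp.coeFn_smul, Pi.smul_apply, rdelta_apply]
  split_ifs with h
  · simp [h]
  · simp

/-- Operators on `ℓ²(X)` are determined by their matrix entries. -/
lemma bops_ext {a b : BOps X} (h : ∀ x z, a (rdelta X x) z = b (rdelta X x) z) : a = b := by
  apply lp.ext_continuousLinearMap (by simp)
  intro x
  ext1
  simp only [ContinuousLinearMap.comp_apply, lp.singleContinuousLinearMap_apply]
  ext z
  exact h x z

lemma entryOf_eq_zero_iff (a : BOps X) (x z : X) :
    entryOf a x z = 0 ↔ a (rdelta X x) z = 0 := by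
  rw [entryOf, rdelta, rdelta, lp.inner_single_right]
  simp

/-! ### Compactness -/

lemma compact_rankOne (x : X) (L : ell2 X →L[ℂ] ℂ) :
    IsCompactOperator (⇑(L.smulRight (rdelta X x)) : ell2 X → ell2 X) := by
  have h1 : IsCompactOperator (⇑L) := isCompactOperator_of_locallyCompactSpace_dom L
  have := h1.clm_comp (ContinuousLinearMap.toSpanSingleton ℂ (rdelta X x))
  exact this

lemma compact_proj_finite {F : Set X} (hF : F.Finite) : IsCompactOperator (⇑(proj F)) := by
  have : proj F = ∑ x ∈ hF.toFinset,
      (lp.evalCLM ℂ (fun _ : X => ℂ) 2 x).smulRight (rdelta X x) := by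
    ext g z
    rw [proj_apply, _root_.sum_apply, lp.coeFn_sum, Finset.sum_apply]
    simp only [ContinuousLinearMap.smulRight_apply, lp.coeFn_smul, Pi.smul_apply, rdelta_apply,
      smul_eq_mul, mul_ite, mul_one, mul_zero, Finset.sum_ite_eq, Set.Finite.mem_toFinset]
    by_cases hz : z ∈ F
    · rw [if_pos hz, if_pos (hF.mem_toFinset.2 hz)]
      rfl
    · rw [if_neg hz, if_neg fun h => hz (hF.mem_toFinset.1 h)]
  rw [this]
  exact Submodule.sum_mem (compactOperator (RingHom.id ℂ) (ell2 X) (ell2 X))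
    fun x _ => compact_rankOne x _

omit [DecidableEq X] in
lemma compact_of_approx (a : BOps X)
    (h : ∀ ε > 0, ∃ b : BOps X, IsCompactOperator (⇑b) ∧ ‖a - b‖ ≤ ε) :
    IsCompactOperator (⇑a) := by
  have hcl : IsClosed {f : BOps X | IsCompactOperator f} := isClosed_setOfPred_isCompactOperator
  have : a ∈ closure {f : BOps X | IsCompactOperator f} := by
    rw [Metric.mem_closure_iff]
    intro ε hε
    obtain ⟨b, hb, hab⟩ := h (ε / 2) (half_pos hε)
    exact ⟨b, hb, by rw [dist_eq_norm]; linarith⟩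
  rwa [hcl.closure_eq] at this

/-- A diagonal operator whose symbol vanishes at infinity is compact. -/
lemma compact_diagOp (f : X → ℂ) (hf : ∃ C, ∀ x, ‖f x‖ ≤ C)
    (h0 : Tendsto f cofinite (𝓝 0)) : IsCompactOperator (⇑(diagOp f hf)) := by
  apply compact_of_approx
  intro ε hε
  have hfin : {x | ¬ ‖f x‖ < ε}.Finite := by
    have := (tendsto_zero_iff_norm_tendsto_zero.1 h0).eventually (gt_mem_nhds hε)
    exact this
  refine ⟨diagOp f hf * proj {x | ¬ ‖f x‖ < ε},
    (compact_proj_finite hfin).clm_comp (diagOp f hf), ?_⟩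
  have hb : ∀ x, ‖if ‖f x‖ < ε then f x else 0‖ ≤ ε := fun x => by
    split_ifs with h
    · exact h.le
    · simpa using hε.le
  have : diagOp f hf - diagOp f hf * proj {x | ¬ ‖f x‖ < ε} =
      diagOp (fun x => if ‖f x‖ < ε then f x else 0) ⟨ε, hb⟩ := by
    ext g z
    rw [_root_.sub_apply, lp.coeFn_sub, Pi.sub_apply,
      mul_apply_eq_comp, diagOp_apply, diagOp_apply, diagOp_apply, proj_apply]
    by_cases h : ‖f z‖ < ε
    · simp [h]
    · simp [h, not_lt.1 h]
  rw [this]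
  exact norm_diagOp_le _ hε.le hb

/-- The basis vectors tend weakly to `0` at infinity, so a compact operator sends them to a family
tending to `0` in norm. -/
lemma tendsto_compact_rdelta (a : BOps X) (ha : IsCompactOperator (⇑a)) :
    Tendsto (fun x => a (rdelta X x)) cofinite (𝓝 0) := by
  obtain ⟨K, hK, hsub⟩ := ha.image_closedBall_subset_compact 1
  refine hK.tendsto_nhds_of_unique_mapClusterPt ?_ ?_
  · refine Eventually.of_forall fun x => hsub ⟨_, ?_, rfl⟩
    simp [norm_rdelta]
  · intro y _ hy
    have hw : Tendsto (fun x => @inner ℂ _ _ y (a (rdelta X x))) cofinite (𝓝 0) := by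
      have h1 : ∀ x, @inner ℂ _ _ y (a (rdelta X x)) =
          (starRingEnd ℂ) ((ContinuousLinearMap.adjoint a y) x) := fun x => by
        rw [← ContinuousLinearMap.adjoint_inner_left, rdelta, lp.inner_single_right]
        simp
      simp only [h1]
      rw [tendsto_zero_iff_norm_tendsto_zero]
      simp only [RCLike.norm_conj]
      have hs := (lp.memℓp (ContinuousLinearMap.adjoint a y)).summable (by simp)
      have ht := hs.tendsto_cofinite_zero
      have := ht.rpow_const (p := (1 / 2 : ℝ)) (Or.inr (by norm_num))
      simpa [← Real.sqrt_eq_rpow, ← one_div, Real.sqrt_sq] using this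
    have hc : MapClusterPt (@inner ℂ _ _ y y) cofinite
        (fun x => @inner ℂ _ _ y (a (rdelta X x))) :=
      hy.continuousAt_comp (f := fun v => @inner ℂ _ _ y v)
        (continuous_const.inner continuous_id).continuousAt
    have : @inner ℂ _ _ y y = (0 : ℂ) := by
      have hne : (𝓝 (@inner ℂ _ _ y y : ℂ) ⊓ 𝓝 0).NeBot :=
        NeBot.mono hc (inf_le_inf_left _ hw)
      exact eq_of_nhds_neBot hne
    exact inner_self_eq_zero.1 this

/-! ### Conditional expectation onto the diagonal -/

/-- The diagonal part `E(a)` of an operator `a`. -/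
def diagPart (a : BOps X) : BOps X :=
  diagOp (fun x => a (rdelta X x) x)
    ⟨‖a‖, fun x => (norm_coord_le _ _).trans (a.unit_le_opNorm _ (norm_rdelta x).le)⟩

lemma norm_diagPart_sub_le (a b : BOps X) : ‖diagPart a - diagPart b‖ ≤ ‖a - b‖ := by
  have h : ∀ x, ‖a (rdelta X x) x - b (rdelta X x) x‖ ≤ ‖a - b‖ := fun x =>
    (norm_coord_le ((a - b) (rdelta X x)) x).trans
      ((a - b).unit_le_opNorm _ (norm_rdelta x).le)
  have : diagPart a - diagPart b =
      diagOp (fun x => a (rdelta X x) x - b (rdelta X x) x) ⟨_, h⟩ := by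
    ext g z
    exact (sub_mul (a (rdelta X z) z) (b (rdelta X z) z) (g z)).symm
  rw [this]
  exact norm_diagOp_le _ (norm_nonneg _) h

/-- Block compression of `a` with respect to the partition into the colour classes of `c`;
colours take values in `{0, …, m - 1}`. -/
def blockDiag (c : X → ℕ) (m : ℕ) (a : BOps X) : BOps X :=
  ∑ j ∈ Finset.range m, proj (c ⁻¹' {j}) * a * proj (c ⁻¹' {j})

section Block

variable {c : X → ℕ} {m : ℕ}

omit [DecidableEq X] in
lemma sum_proj_colour (hc : ∀ x, c x < m) : ∑ j ∈ Finset.range m, proj (c ⁻¹' {j}) = 1 := by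
  ext g z
  rw [_root_.sum_apply, lp.coeFn_sum, Finset.sum_apply]
  simp [proj_apply, hc z]

omit [DecidableEq X] in
lemma blockDiag_apply (hc : ∀ x, c x < m) (a : BOps X) (g : ell2 X) (z : X) :
    blockDiag c m a g z = a (proj (c ⁻¹' {c z}) g) z := by
  rw [blockDiag, _root_.sum_apply, lp.coeFn_sum, Finset.sum_apply]
  simp [proj_apply, hc z]

omit [DecidableEq X] in
/-- Pythagoras for the orthogonal decomposition of `ℓ²(X)` given by the colour classes. -/
lemma norm_sq_eq_sum_proj (hc : ∀ x, c x < m) (g : ell2 X) :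
    ‖g‖ ^ 2 = ∑ j ∈ Finset.range m, ‖proj (c ⁻¹' {j}) g‖ ^ 2 := by
  have h : @inner ℂ _ _ g g =
      ∑ j ∈ Finset.range m, @inner ℂ _ _ (proj (c ⁻¹' {j}) g) (proj (c ⁻¹' {j}) g) := by
    have h1 : g = ∑ j ∈ Finset.range m, proj (c ⁻¹' {j}) g := by
      conv_lhs => rw [← one_apply_eq_self (F := BOps X) g, ← sum_proj_colour hc, _root_.sum_apply]
    conv_lhs => rw [h1, inner_sum]
    rw [← h1]
    refine Finset.sum_congr rfl fun j _ => ?_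
    rw [inner_proj, proj_proj]
  simp only [inner_self_eq_norm_sq_to_K] at h
  exact_mod_cast h

omit [DecidableEq X] in
lemma norm_blockDiag_le (hc : ∀ x, c x < m) (a : BOps X) : ‖blockDiag c m a‖ ≤ ‖a‖ := by
  refine ContinuousLinearMap.opNorm_le_bound _ (norm_nonneg _) fun g => ?_
  refine le_of_sq_le_sq ?_ (by positivity)
  rw [norm_sq_eq_sum_proj hc, mul_pow, norm_sq_eq_sum_proj hc g, Finset.mul_sum]
  refine Finset.sum_le_sum fun j _ => ?_
  rw [← mul_pow]
  refine pow_le_pow_left₀ (norm_nonneg _) (le_trans ?_ (a.le_opNorm _)) 2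
  refine lp.norm_mono (by simp) fun z => ?_
  rw [proj_apply]
  split_ifs with hz
  · rw [blockDiag_apply hc, show c z = j from hz]
  · simp

/-- If every colour class is `r`-separated, compressing an operator of propagation at most `r` to
the colour classes leaves only its diagonal. -/
lemma blockDiag_eq_diagPart [MetricSpace X] (hc : ∀ x, c x < m) {r : ℝ}
    (hsep : ∀ x y, c x = c y → dist x y ≤ r → x = y) (a : BOps X)
    (ha : ∀ x z : X, r < dist x z → entryOf a x z = 0) : blockDiag c m a = diagPart a := by
  refine bops_ext fun x z => ?_
  rw [blockDiag_apply hc, diagPart, diagOp_apply, rdelta_apply]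
  have hp : proj (c ⁻¹' {c z}) (rdelta X x) = if c x = c z then rdelta X x else 0 := by
    ext y
    rw [proj_apply]
    by_cases hyx : y = x
    · subst hyx
      by_cases h : c y = c z <;> simp [h]
    · by_cases h : c x = c z <;> simp [h, rdelta_apply, hyx]
  rw [hp]
  by_cases hzx : z = x
  · subst hzx
    simp
  · by_cases h : c x = c z
    · have : r < dist x z := lt_of_not_ge fun hle => hzx (hsep x z h hle).symm
      simp [h, hzx, (entryOf_eq_zero_iff a x z).1 (ha x z this)]
    · simp [h, hzx]

omit [DecidableEq X] in
/-- Since `∑ χ_j = 1` and `χ_j² = χ_j`, the difference `a - ∑ χ_j a χ_j` is the finite sum of the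
`[a, χ_j] χ_j`. -/
lemma compact_sub_blockDiag (hc : ∀ x, c x < m) (a : BOps X)
    (ha : ∀ B : Set X, IsCompactOperator (⇑(a * proj B - proj B * a))) :
    IsCompactOperator (⇑(a - blockDiag c m a)) := by
  have h : a - blockDiag c m a =
      ∑ j ∈ Finset.range m,
        (a * proj (c ⁻¹' {j}) - proj (c ⁻¹' {j}) * a) * proj (c ⁻¹' {j}) := by
    have hpp : ∀ B : Set X, proj B * proj B = proj B := fun B => by
      ext1 g
      exact proj_proj B g
    simp only [sub_mul, Finset.sum_sub_distrib, mul_assoc, hpp]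
    rw [← Finset.mul_sum, sum_proj_colour hc, mul_one, blockDiag]
    simp only [mul_assoc]
  rw [h]
  exact Submodule.sum_mem (compactOperator (RingHom.id ℂ) (ell2 X) (ell2 X))
    fun j _ => (ha _).comp_clm _

end Block

omit [DecidableEq X] in
/-- Greedy colouring along a well-order: the graph joining points at distance at most `r` has
uniformly bounded degree, so finitely many colours suffice. -/
lemma exists_colouring [MetricSpace X] (hX : IsULFSpace X) (r : ℝ) :
    ∃ (m : ℕ) (c : X → ℕ), (∀ x, c x < m) ∧ ∀ x y, c x = c y → dist x y ≤ r → x = y := by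
  classical
  obtain ⟨N, hN⟩ := hX (max r 1) (lt_max_of_lt_right one_pos)
  let R : X → X → Prop := WellOrderingRel
  have hwo : IsWellOrder X R := WellOrderingRel.isWellOrder
  let c : X → ℕ := hwo.wf.fix fun x ih =>
    sInf {k | ∀ y (h : R y x), dist y x ≤ r → ih y h ≠ k}
  have hc : ∀ x, c x = sInf {k | ∀ y, R y x → dist y x ≤ r → c y ≠ k} := fun x =>
    hwo.wf.fix_eq _ x
  have hex : ∀ x, ∃ k < N + 1, ∀ y, R y x → dist y x ≤ r → c y ≠ k := by
    intro x
    by_contra! hcon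
    have hsub : (Finset.range (N + 1) : Set ℕ) ⊆ c '' closedBall x (max r 1) := by
      intro k hk
      obtain ⟨y, -, hy, hyk⟩ := hcon k (by simpa using hk)
      exact ⟨y, mem_closedBall.2 (hy.trans (le_max_left _ _)), hyk⟩
    have h1 := Set.ncard_le_ncard hsub ((hN x).1.image c)
    have h2 := Set.ncard_image_le (f := c) (hN x).1
    rw [Set.ncard_coe_finset, Finset.card_range] at h1
    have h3 := (hN x).2
    omega
  have hmem : ∀ x y, R y x → dist y x ≤ r → c y ≠ c x := by
    intro x
    obtain ⟨k, -, hk⟩ := hex x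
    have := Nat.sInf_mem (s := {k | ∀ y, R y x → dist y x ≤ r → c y ≠ k}) ⟨k, hk⟩
    rwa [← hc x] at this
  refine ⟨N + 1, c, fun x => ?_, fun x y hxy hd => ?_⟩
  · obtain ⟨k, hkN, hk⟩ := hex x
    rw [hc x]
    exact (Nat.sInf_le (s := {k | ∀ y, R y x → dist y x ≤ r → c y ≠ k}) hk).trans_lt hkN
  · rcases trichotomous_of R x y with h | h | h
    · exact absurd hxy (hmem y x h hd)
    · exact h
    · exact absurd hxy.symm (hmem x y h (by rwa [dist_comm]))

variable [MetricSpace X]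

lemma proj_mem_roe (B : Set X) : proj B ∈ RoeSet X := by
  refine subset_closure ⟨0, fun x z hxz => ?_⟩
  have hne : z ≠ x := fun h => by simp [h] at hxz
  rw [entryOf_eq_zero_iff, proj_apply, rdelta_apply]
  simp [hne]

/-- An element of the uniform Roe algebra which commutes modulo compacts with all `χ_B` is
diagonal modulo compacts. -/
lemma compact_sub_diagPart (hX : IsULFSpace X) (T : BOps X) (hT : T ∈ RoeSet X)
    (hcomm : ∀ B : Set X, IsCompactOperator (⇑(T * proj B - proj B * T))) :
    IsCompactOperator (⇑(T - diagPart T)) := by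
  apply compact_of_approx
  intro ε hε
  obtain ⟨T', ⟨r, hr⟩, hTT'⟩ := Metric.mem_closure_iff.1 hT (ε / 2) (half_pos hε)
  obtain ⟨m, c, hc, hsep⟩ := exists_colouring hX r
  refine ⟨T - blockDiag c m T, compact_sub_blockDiag hc T hcomm, ?_⟩
  have hlin : blockDiag c m T - blockDiag c m T' = blockDiag c m (T - T') := by
    simp only [blockDiag, mul_sub, sub_mul, Finset.sum_sub_distrib]
  have hd := blockDiag_eq_diagPart hc hsep T' hr
  have h1 := norm_blockDiag_le hc (T - T')
  have h2 := norm_diagPart_sub_le T' T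
  have heq : T - diagPart T - (T - blockDiag c m T) =
      blockDiag c m (T - T') + (diagPart T' - diagPart T) := by
    rw [← hlin, hd]
    abel
  rw [dist_eq_norm] at hTT'
  rw [norm_sub_rev T' T] at h2
  rw [heq]
  exact (norm_add_le _ _).trans (by linarith)

/-! ### Central projections -/

omit [MetricSpace X] in
/-- If `T` is diagonal modulo compacts and idempotent modulo compacts, then its diagonal entries
`d` satisfy `d - d² → 0` at infinity, hence are asymptotic to the indicator function of
`B = {‖d‖ ≥ 1/2}`. -/
lemma exists_approx_indicator (T : BOps X) (hTproj : IsCompactOperator (⇑(T - T * T)))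
    (hTd : IsCompactOperator (⇑(T - diagPart T))) :
    ∃ B : Set X, Tendsto (fun x => T (rdelta X x) x - B.indicator 1 x) cofinite (𝓝 (0 : ℂ)) := by
  classical
  set D := diagPart T with hD
  have hDD : IsCompactOperator (⇑(D - D * D)) := by
    have heq : D - D * D = (T - T * T) - (T - D) + ((T - D) * T + D * (T - D)) := by
      noncomm_ring
    rw [heq]
    exact (hTproj.sub hTd).add ((hTd.comp_clm T).add (hTd.clm_comp D))
  have hlim := tendsto_zero_iff_norm_tendsto_zero.1 (tendsto_compact_rdelta _ hDD)
  set d : X → ℂ := fun x => T (rdelta X x) x with hd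
  have hDδ : ∀ x, D (rdelta X x) = d x • rdelta X x := fun x => diagOp_rdelta _ _ x
  have hval : ∀ x, ‖(D - D * D) (rdelta X x)‖ = ‖d x‖ * ‖1 - d x‖ := fun x => by
    rw [_root_.sub_apply, mul_apply_eq_comp, hDδ, map_smul, hDδ, smul_smul, ← sub_smul,
      norm_smul, norm_rdelta, mul_one, ← norm_mul, mul_sub, mul_one]
  simp only [hval] at hlim
  refine ⟨{x | 1 / 2 ≤ ‖d x‖}, ?_⟩
  have h2 := hlim.const_mul 2
  rw [mul_zero] at h2
  refine squeeze_zero_norm (fun x => ?_) h2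
  by_cases hx : 1 / 2 ≤ ‖d x‖
  · rw [indicator_of_mem (show x ∈ {x | 1 / 2 ≤ ‖d x‖} from hx), Pi.one_apply, norm_sub_rev]
    nlinarith [norm_nonneg (1 - d x)]
  · rw [indicator_of_notMem (show x ∉ {x | 1 / 2 ≤ ‖d x‖} from hx), sub_zero]
    -- Here `‖1 - d x‖ ≥ 1/2`, so `‖d x‖ ≤ 2 ‖d x - (d x)²‖`.
    have : 1 ≤ ‖d x‖ + ‖1 - d x‖ := by
      have := norm_add_le (d x) (1 - d x)
      simpa using this
    nlinarith [norm_nonneg (d x)]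

omit [DecidableEq X] in
/-- A `t`-connected set which is split by `B` contains a pair of `t`-close points separated
by `B`. -/
lemma exists_jump {t : ℝ} {S B : Set X} (hS : TConnSubset t S) {x z : X} (hx : x ∈ S)
    (hxB : x ∈ B) (hz : z ∈ S) (hzB : z ∉ B) :
    ∃ u ∈ S, ∃ v ∈ S, u ∈ B ∧ v ∉ B ∧ dist u v ≤ t := by
  obtain ⟨m, c, h0, hm, hmem, hstep⟩ := hS x hx z hz
  by_contra! hcon
  have : ∀ i ≤ m, c i ∈ B := by
    intro i
    induction i with
    | zero => intro _; rwa [h0]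
    | succ k ih =>
      intro hk
      by_contra hk'
      exact absurd (hstep k hk) (not_le.2 (hcon _ (hmem k (by omega)) _ (hmem (k + 1) hk)
        (ih (by omega)) hk'))
  exact hzB (hm ▸ this m le_rfl)

/-- If the diagonal of `T` is asymptotic to `χ_B` and `T`, diagonal modulo compacts, commutes with
the uniform Roe algebra modulo compacts, then `B` splits only finitely many of the pieces `Xₙ`:
otherwise the partial translation moving, in each of infinitely many pieces, a point outside `B` to
a `t`-close point of `B` would have a noncompact commutator with `T`. -/
lemma finite_split {t : ℝ} {Xn : ℕ → Set X} (hcdu : IsCDU Xn)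
    (hconn : ∀ n : ℕ, TConnSubset t (Xn n)) (T : BOps X)
    (hcomm : ∀ S ∈ RoeSet X, IsCompactOperator (⇑(T * S - S * T)))
    (hTd : IsCompactOperator (⇑(T - diagPart T))) {B : Set X}
    (hB : Tendsto (fun x => T (rdelta X x) x - B.indicator 1 x) cofinite (𝓝 (0 : ℂ))) :
    {n | (∃ x ∈ Xn n, x ∈ B) ∧ ∃ z ∈ Xn n, z ∉ B}.Finite := by
  classical
  set bad := {n | (∃ x ∈ Xn n, x ∈ B) ∧ ∃ z ∈ Xn n, z ∉ B} with hbad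
  have hpair : ∀ n : bad, ∃ p : X × X, p.1 ∈ Xn n ∧ p.2 ∈ Xn n ∧ p.1 ∈ B ∧ p.2 ∉ B ∧
      dist p.1 p.2 ≤ t := by
    rintro ⟨n, ⟨x, hx, hxB⟩, z, hz, hzB⟩
    obtain ⟨u, hu, v, hv, h⟩ := exists_jump (hconn n) hx hxB hz hzB
    exact ⟨(u, v), hu, hv, h⟩
  choose p hp1 hp2 hpB1 hpB2 hpt using hpair
  have hidx : ∀ {x : X} {m n : ℕ}, x ∈ Xn m → x ∈ Xn n → m = n := fun {x} _ _ h h' =>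
    (hcdu.1 x).unique h h'
  have hinj1 : Function.Injective fun n => (p n).1 := fun m n (h : (p m).1 = (p n).1) =>
    Subtype.ext (hidx (hp1 m) (h ▸ hp1 n))
  have hinj2 : Function.Injective fun n => (p n).2 := fun m n (h : (p m).2 = (p n).2) =>
    Subtype.ext (hidx (hp2 m) (h ▸ hp2 n))
  -- The partial translation `S` sends `δ` at `(p n).2` to `δ` at `(p n).1`; pulling functions back
  -- along `σ : (p n).1 ↦ (p n).2` realizes it.
  let σ : X → X := fun x => if h : ∃ n, (p n).1 = x then (p h.choose).2 else x
  let f : X → ℂ := fun x => if ∃ n, (p n).1 = x then 1 else 0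
  have hσ : ∀ n, σ (p n).1 = (p n).2 := fun n => by
    have h : ∃ k, (p k).1 = (p n).1 := ⟨n, rfl⟩
    have h' : h.choose = n := hinj1 h.choose_spec
    simp only [σ, dif_pos h, h']
  have hf1 : ∀ n, f (p n).1 = 1 := fun n => if_pos ⟨n, rfl⟩
  have hfne : ∀ x, f x ≠ 0 → ∃ n, (p n).1 = x := fun x hx => by
    by_contra h
    exact hx (if_neg h)
  have hfb : ∃ C, ∀ x, ‖f x‖ ≤ C := ⟨1, fun x => by simp only [f]; split_ifs <;> simp⟩
  have hσinj : InjOn σ {x | f x ≠ 0} := by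
    intro x hx y hy hxy
    obtain ⟨m, rfl⟩ := hfne x hx
    obtain ⟨n, rfl⟩ := hfne y hy
    rw [hσ, hσ] at hxy
    rw [hinj2 hxy]
  set S := wcomp σ f hfb hσinj with hS
  have hSroe : S ∈ RoeSet X := by
    refine subset_closure ⟨t, fun x z hxz => ?_⟩
    rw [entryOf_eq_zero_iff, hS, wcomp_apply, rdelta_apply]
    by_cases hz : f z = 0
    · simp [hz]
    · obtain ⟨n, rfl⟩ := hfne z hz
      rw [hσ, if_neg, mul_zero]
      rintro rfl
      rw [dist_comm] at hxz
      exact absurd (hpt n) (not_le.2 hxz)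
  set D := diagPart T with hD
  have hDcomm : IsCompactOperator (⇑(D * S - S * D)) := by
    have heq : D * S - S * D = (T * S - S * T) - ((T - D) * S - S * (T - D)) := by noncomm_ring
    rw [heq]
    exact (hcomm S hSroe).sub ((hTd.comp_clm S).sub (hTd.clm_comp S))
  have hlim := tendsto_compact_rdelta _ hDcomm
  set d : X → ℂ := fun x => T (rdelta X x) x with hd
  -- This commutator entry tends to `1` in modulus, against the compactness of `D * S - S * D`.
  have hcoord : ∀ n, (D * S - S * D) (rdelta X (p n).2) (p n).1 = d (p n).1 - d (p n).2 := by
    intro n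
    rw [_root_.sub_apply, mul_apply_eq_comp, mul_apply_eq_comp, lp.coeFn_sub, Pi.sub_apply, hD,
      diagPart, diagOp_apply, hS, wcomp_apply, wcomp_apply, diagOp_apply, hσ, hf1, rdelta_apply]
    simp [hd]
  by_contra hinf
  have : Infinite bad := Set.infinite_coe_iff.2 hinf
  have e1 := (tendsto_zero_iff_norm_tendsto_zero.1 hlim).comp hinj2.tendsto_cofinite
  have e2 := (tendsto_zero_iff_norm_tendsto_zero.1 hB).comp hinj1.tendsto_cofinite
  have e3 := (tendsto_zero_iff_norm_tendsto_zero.1 hB).comp hinj2.tendsto_cofinite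
  have hq : (0 : ℝ) < 1 / 4 := by norm_num
  obtain ⟨n, h1, h2, h3⟩ := ((e1.eventually (gt_mem_nhds hq)).and
    ((e2.eventually (gt_mem_nhds hq)).and (e3.eventually (gt_mem_nhds hq)))).exists
  simp only [Function.comp_apply] at h1 h2 h3
  rw [indicator_of_mem (hpB1 n), Pi.one_apply] at h2
  rw [indicator_of_notMem (hpB2 n), sub_zero] at h3
  have h4 := (norm_coord_le ((D * S - S * D) (rdelta X (p n).2)) (p n).1).trans_lt h1
  rw [hcoord] at h4
  have h5 : (1 : ℂ) = (d (p n).1 - d (p n).2) - (d (p n).1 - 1) + d (p n).2 := by ring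
  have h6 : (1 : ℝ) ≤ ‖d (p n).1 - d (p n).2‖ + ‖d (p n).1 - 1‖ + ‖d (p n).2‖ := by
    calc (1 : ℝ) = ‖(1 : ℂ)‖ := by simp
      _ = ‖(d (p n).1 - d (p n).2) - (d (p n).1 - 1) + d (p n).2‖ := by rw [← h5]
      _ ≤ _ := (norm_add_le _ _).trans (by gcongr; exact norm_sub_le _ _)
  linarith

/-- The projection onto a union of pieces commutes modulo compacts with the uniform Roe algebra,
because an operator of finite propagation connects only finitely many distinct pieces. -/
lemma compact_comm_proj_union {Xn : ℕ → Set X} (hcdu : IsCDU Xn) (A : Set ℕ) (S : BOps X)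
    (hS : S ∈ RoeSet X) :
    IsCompactOperator (⇑(proj (⋃ n ∈ A, Xn n) * S - S * proj (⋃ n ∈ A, Xn n))) := by
  set U := ⋃ n ∈ A, Xn n with hU
  have hmemU : ∀ {x : X} {n : ℕ}, x ∈ Xn n → (x ∈ U ↔ n ∈ A) := by
    intro x n hx
    simp only [hU, mem_iUnion, exists_prop]
    refine ⟨?_, fun h => ⟨n, h, hx⟩⟩
    rintro ⟨m, hm, hxm⟩
    rwa [← (hcdu.1 x).unique hxm hx]
  have hcl : IsClosed {S : BOps X | IsCompactOperator (⇑(proj U * S - S * proj U))} := by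
    have h : IsClosed {f : BOps X | IsCompactOperator f} := isClosed_setOfPred_isCompactOperator
    exact h.preimage (f := fun S : BOps X => proj U * S - S * proj U) (by fun_prop)
  refine closure_minimal ?_ hcl hS
  rintro S ⟨r, hr⟩
  obtain ⟨k, hk⟩ := hcdu.2.2 (r + 1)
  -- Distinct pieces with an index at least `k` are more than `r` apart, so the commutator of an
  -- operator of propagation `r` has its range supported in the finite set `F`.
  set F := ⋃ n ∈ Finset.range k, Xn n with hF
  have hFfin : F.Finite := (Finset.range k).finite_toSet.biUnion fun n _ => hcdu.2.1 n
  have heq : proj U * S - S * proj U = proj F * (proj U * S - S * proj U) := by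
    refine bops_ext fun x z => ?_
    rw [mul_apply_eq_comp, proj_apply]
    split_ifs with hzF
    · rfl
    · have hpx : proj U (rdelta X x) = (U.indicator 1 x : ℂ) • rdelta X x := by
        classical
        rw [proj, diagOp_rdelta]
        by_cases hx : x ∈ U <;> simp [hx]
      rw [_root_.sub_apply, mul_apply_eq_comp, mul_apply_eq_comp, hpx, map_smul, lp.coeFn_sub,
        Pi.sub_apply, proj_apply, lp.coeFn_smul, Pi.smul_apply]
      by_cases h0 : S (rdelta X x) z = 0
      · simp [h0]
      · have hd : dist x z ≤ r := by
          by_contra hlt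
          exact h0 ((entryOf_eq_zero_iff S x z).1 (hr x z (not_le.1 hlt)))
        obtain ⟨m, hm, -⟩ := hcdu.1 x
        obtain ⟨n, hn, -⟩ := hcdu.1 z
        have hnk : k ≤ n := by
          by_contra hlt
          exact hzF (mem_biUnion (Finset.mem_coe.2 (Finset.mem_range.2 (not_le.1 hlt))) hn)
        have hmn : m = n := by
          by_contra hne
          have := hk m n hne (by omega) x hm z hn
          linarith
        subst hmn
        have hiff : x ∈ U ↔ z ∈ U := (hmemU hm).trans (hmemU hn).symm
        by_cases hx : x ∈ U
        · simp [hx, hiff.1 hx]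
        · have hz : z ∉ U := fun h => hx (hiff.2 h)
          simp [hx, hz]
  have := (compact_proj_finite hFfin).comp_clm (proj U * S - S * proj U)
  change IsCompactOperator (⇑(proj U * S - S * proj U))
  rw [heq]
  exact this

end Helpers

/-- Let `X = ⊔ₙ Xₙ` be a u.l.f. coarse disjoint union of finite
`t`-connected metric spaces and let `T ∈ C*_u(X)` be a projection modulo the compacts.
Then `T` commutes with every element of `C*_u(X)` modulo the compacts iff there is `A ⊆ ℕ`
such that `T` differs from the diagonal projection `χ_{X_A}` by a compact operator. -/
theorem stmt16 {X : Type*} [MetricSpace X] [DecidableEq X]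
    (t : ℝ) (ht : 0 < t) (hX : IsULFSpace X)
    (Xn : ℕ → Set X) (hcdu : IsCDU Xn) (hconn : ∀ n : ℕ, TConnSubset t (Xn n))
    (T : BOps X) (hT : T ∈ RoeSet X)
    (hTproj : IsCompactOperator (⇑(T - T * T)))
    (hTsa : IsCompactOperator (⇑(T - star T))) :
    (∀ S ∈ RoeSet X, IsCompactOperator (⇑(T * S - S * T))) ↔
    (∃ (A : Set ℕ) (P : BOps X),
      (∀ x : X, x ∈ (⋃ n ∈ A, Xn n) → P (rdelta X x) = rdelta X x) ∧
      (∀ x : X, x ∉ (⋃ n ∈ A, Xn n) → P (rdelta X x) = 0) ∧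
      IsCompactOperator (⇑(T - P))) := by
  classical
  constructor
  · intro hcomm
    have hTd := compact_sub_diagPart hX T hT fun B => hcomm _ (proj_mem_roe B)
    obtain ⟨B, hB⟩ := exists_approx_indicator T hTproj hTd
    have hfin := finite_split hcdu hconn T hcomm hTd hB
    -- Up to finitely many points, `B` is the union of the pieces it contains.
    set U := ⋃ n ∈ {n | Xn n ⊆ B}, Xn n with hU
    refine ⟨{n | Xn n ⊆ B}, proj U, fun x hx => ?_, fun x hx => ?_, ?_⟩
    · have hx' : x ∈ U := hx
      rw [proj, diagOp_rdelta, if_pos hx', one_smul]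
    · have hx' : x ∉ U := hx
      rw [proj, diagOp_rdelta, if_neg hx', zero_smul]
    · have hUB : U ⊆ B := iUnion₂_subset fun n hn => hn
      have hsub : B \ U ⊆ ⋃ n ∈ {n | (∃ x ∈ Xn n, x ∈ B) ∧ ∃ z ∈ Xn n, z ∉ B}, Xn n := by
        rintro x ⟨hxB, hxU⟩
        obtain ⟨n, hn, -⟩ := hcdu.1 x
        refine mem_biUnion ⟨⟨x, hn, hxB⟩, ?_⟩ hn
        by_contra! hcon
        exact hxU (mem_biUnion (show n ∈ {n | Xn n ⊆ B} from hcon) hn)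
      have hBU : (B \ U).Finite := (hfin.biUnion fun n _ => hcdu.2.1 n).subset hsub
      have hlim : Tendsto (fun x => T (rdelta X x) x - if x ∈ U then 1 else 0) cofinite
          (𝓝 (0 : ℂ)) := by
        refine hB.congr' ?_
        filter_upwards [hBU.compl_mem_cofinite] with x hx
        by_cases hxU : x ∈ U
        · simp [hxU, hUB hxU]
        · have hxB : x ∉ B := fun h => hx ⟨h, hxU⟩
          simp [hxU, hxB]
      have hbd : ∃ C, ∀ x, ‖T (rdelta X x) x - if x ∈ U then 1 else 0‖ ≤ C :=
        ⟨‖T‖ + 1, fun x => (norm_sub_le _ _).trans (add_le_add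
          ((norm_coord_le _ _).trans (T.unit_le_opNorm _ (norm_rdelta x).le))
          (by split_ifs <;> simp))⟩
      have hDP : diagPart T - proj U = diagOp _ hbd := by
        ext g z
        exact (sub_mul (T (rdelta X z) z) (if z ∈ U then 1 else 0) (g z)).symm
      have heq : T - proj U = (T - diagPart T) + diagOp _ hbd := by
        rw [← hDP]
        abel
      rw [heq]
      exact hTd.add (compact_diagOp _ hbd hlim)
  · rintro ⟨A, P, hP1, hP0, hTP⟩ S hS
    have hP : P = proj (⋃ n ∈ A, Xn n) := by
      refine bops_ext fun x z => ?_
      rw [proj, diagOp_rdelta]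
      by_cases hx : x ∈ ⋃ n ∈ A, Xn n
      · rw [hP1 x hx, if_pos hx, one_smul]
      · rw [hP0 x hx, if_neg hx, zero_smul]
    have hPS := compact_comm_proj_union hcdu A S hS
    rw [← hP] at hPS
    have heq : T * S - S * T = ((T - P) * S - S * (T - P)) + (P * S - S * P) := by noncomm_ring
    rw [heq]
    exact ((hTP.comp_clm S).sub (hTP.clm_comp S)).add hPS
end
end
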